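/- arXiv:cs/9811019 — 3 statements merged into one kernel-verified Lean document; each statement's English description precedes it below -/
import Mathlib

section
/- If a simple open polygonal chain in ℝ³ has a simple orthogonal projection onto some plane, then the chain can be straightened, i.e., there is a motion (a continuous, simplicity-preserving, edge-length-preserving deformation) taking it to a straight configuration. -/
noncomputable section

/-- Three-dimensional Euclidean space. -/
abbrev E3 := EuclideanSpace ℝ (Fin 3)

/-- `v 0, …, v n` is a simple open polygonal chain in ℝ³: `n ≥ 1`, the vertices are
pairwise distinct, and two edges `[v i, v (i+1)]`, `[v j, v (j+1)]` (for `i < j < n`)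
are disjoint unless they are consecutive (`j = i + 1`), in which case they meet
exactly in the common vertex `v j`. -/
def IsSimpleOpenChain (n : ℕ) (v : ℕ → E3) : Prop :=
  1 ≤ n ∧
  (∀ i j, i ≤ n → j ≤ n → i ≠ j → v i ≠ v j) ∧
  (∀ i j, i < j → j < n →
    segment ℝ (v i) (v (i + 1)) ∩ segment ℝ (v j) (v (j + 1)) =
      if i + 1 = j then {v j} else ∅)

/-- A motion of the open chain `v 0, …, v n`: a continuous family of configurations
over the time interval `[0,1]`, starting at `v`, remaining a simple open chain at
all times, and preserving all edge lengths. -/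
def IsChainMotion (n : ℕ) (v : ℕ → E3) (γ : ℝ → ℕ → E3) : Prop :=
  (∀ i, i ≤ n → ContinuousOn (fun t => γ t i) (Set.Icc 0 1)) ∧
  (∀ i, i ≤ n → γ 0 i = v i) ∧
  (∀ t ∈ Set.Icc (0 : ℝ) 1, IsSimpleOpenChain n (γ t)) ∧
  (∀ t ∈ Set.Icc (0 : ℝ) 1, ∀ i, i < n → ‖γ t (i + 1) - γ t i‖ = ‖v (i + 1) - v i‖)

/-- The configuration `w` is a straightening of the chain `v 0, …, v n`: all vertices
lie on a line, in order, with consecutive distances the original edge lengths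
`ℓ j = ‖v (j+1) - v j‖`. -/
def IsStraightening (n : ℕ) (v : ℕ → E3) (w : ℕ → E3) : Prop :=
  ∃ (p u : E3), ‖u‖ = 1 ∧
    ∀ i, i ≤ n → w i = p + (∑ j ∈ Finset.range i, ‖v (j + 1) - v j‖) • u

/-- The open chain `v 0, …, v n` can be straightened: there is a motion whose final
configuration is straight. -/
def CanBeStraightened (n : ℕ) (v : ℕ → E3) : Prop :=
  ∃ γ : ℝ → ℕ → E3, IsChainMotion n v γ ∧ IsStraightening n v (γ 1)

/-- The chain `v 0, …, v n` has a simple orthogonal projection: there is a plane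
(2-dimensional affine subspace `S` of ℝ³) such that the orthogonal projections
`w i` of the vertices onto `S` (characterized by `w i ∈ S` and `v i - w i ⟂ S`)
form a simple open polygonal chain. -/
def HasSimpleOrthogonalProjection (n : ℕ) (v : ℕ → E3) : Prop :=
  ∃ (S : AffineSubspace ℝ E3) (w : ℕ → E3),
    Module.finrank ℝ S.direction = 2 ∧
    (∀ i, i ≤ n → w i ∈ S ∧ v i - w i ∈ S.directionᗮ) ∧
    IsSimpleOpenChain n w

/-!
The vertical component of each edge of the chain is determined, up to its direction, by the length
of the edge and of its projection. Hence a motion of the projected chain through simple chains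
whose edges are never longer than the given ones lifts to a motion preserving the edge lengths, and
it is enough to bring the projected chain to the straight chain with the full edge lengths: the
lift of that one is horizontal.

In such a motion edges may be shortened. If the vertices after some vertex lie on a ray, shrink this
tail until the only earlier edge it can hit is the one it is attached to, turn it to prolong that
edge without pointing back along it on the way, and count the edge as part of the tail. Once the
whole chain is straight, stretch it.
-/

open Set Filter Topology

section RayTail

variable {V W : Type*} [AddCommGroup V] [Module ℝ V] [AddCommGroup W] [Module ℝ W]
  {n k : ℕ} {p q : ℕ → V} {s : ℕ → ℝ} {d e : V} {r : ℝ}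

/-- The counterpart of `IsSimpleOpenChain` in an arbitrary real vector space, allowing `n = 0`.
Distinctness is only demanded of consecutive vertices: the condition on the edges implies the
rest. -/
structure IsSimpleChain (n : ℕ) (p : ℕ → V) : Prop where
  ne_succ : ∀ i < n, p i ≠ p (i + 1)
  eq_of_mem : ∀ i j, i < j → j < n → ∀ x ∈ segment ℝ (p i) (p (i + 1)),
    x ∈ segment ℝ (p j) (p (j + 1)) → i + 1 = j ∧ x = p j

namespace IsSimpleChain

theorem congr (hp : IsSimpleChain n p) (h : ∀ i ≤ n, p i = q i) : IsSimpleChain n q where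
  ne_succ i hi := by
    rw [← h i hi.le, ← h (i + 1) hi]
    exact hp.ne_succ i hi
  eq_of_mem i j hij hj := by
    rw [← h i (hij.trans hj).le, ← h (i + 1) (hij.trans hj), ← h j hj.le, ← h (j + 1) hj]
    exact hp.eq_of_mem i j hij hj

theorem mono {m : ℕ} (hp : IsSimpleChain n p) (hmn : m ≤ n) : IsSimpleChain m p where
  ne_succ i hi := hp.ne_succ i (hi.trans_le hmn)
  eq_of_mem i j hij hj := hp.eq_of_mem i j hij (hj.trans_le hmn)

theorem of_map (f : V →ᵃ[ℝ] W) (h : IsSimpleChain n fun i => f (p i)) : IsSimpleChain n p where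
  ne_succ i hi heq := h.ne_succ i hi (congrArg f heq)
  eq_of_mem i j hij hj x hxi hxj := by
    have map_mem : ∀ l, x ∈ segment ℝ (p l) (p (l + 1)) →
        f x ∈ segment ℝ (f (p l)) (f (p (l + 1))) := fun l hl =>
      image_segment ℝ f (p l) (p (l + 1)) ▸ mem_image_of_mem f hl
    obtain ⟨hij', hfx⟩ := h.eq_of_mem i j hij hj (f x) (map_mem i hxi) (map_mem j hxj)
    refine ⟨hij', ?_⟩
    rw [segment_eq_image_lineMap] at hxj
    obtain ⟨t, -, rfl⟩ := hxj
    rw [AffineMap.apply_lineMap] at hfx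
    rcases AffineMap.lineMap_eq_left_iff.mp hfx with hdeg | rfl
    · exact absurd hdeg (h.ne_succ j hj)
    · exact AffineMap.lineMap_apply_zero _ _

theorem ne (hp : IsSimpleChain n p) {i j : ℕ} (hij : i < j) (hj : j ≤ n) : p i ≠ p j := by
  obtain ⟨j, rfl⟩ := Nat.exists_eq_succ_of_ne_zero (Nat.ne_zero_of_lt hij)
  rcases (Nat.lt_succ_iff.mp hij).eq_or_lt with rfl | hij
  · exact hp.ne_succ i hj
  · intro heq
    obtain ⟨rfl, h⟩ := hp.eq_of_mem i j hij hj (p i) (left_mem_segment ℝ _ _)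
      (heq ▸ right_mem_segment ℝ _ _)
    exact hp.ne_succ i (by omega) h

end IsSimpleChain

/-- `s` gives the positions of the vertices of a straight tail starting at vertex `k`, as
multiples of its direction. -/
structure IsTailProfile (n k : ℕ) (s : ℕ → ℝ) : Prop where
  zero : ∀ i ≤ k, s i = 0
  lt_succ : ∀ i, k ≤ i → i < n → s i < s (i + 1)

theorem IsTailProfile.strictMonoOn (hs : IsTailProfile n k s) : StrictMonoOn s (Icc k n) :=
  strictMonoOn_of_lt_add_one ordConnected_Icc fun i _ hi hi' => hs.lt_succ i hi.1 hi'.2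

/-- The chain `p` with its part after vertex `k` replaced by vertices on the ray from `p k` in
direction `d`, at positions `s`; meant for profiles `s` vanishing up to `k`. -/
def rayTail (p : ℕ → V) (k : ℕ) (s : ℕ → ℝ) (d : V) : ℕ → V :=
  fun i => p (min i k) + s i • d

theorem rayTail_of_le (hs : IsTailProfile n k s) {i : ℕ} (hi : i ≤ k) :
    rayTail p k s d i = p i := by
  simp [rayTail, hi, hs.zero i hi]

theorem rayTail_of_ge {i : ℕ} (hi : k ≤ i) : rayTail p k s d i = p k + s i • d := by
  simp [rayTail, hi]

theorem segment_rayTail (hs : IsTailProfile n k s) {i : ℕ} (hki : k ≤ i) (hin : i < n) :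
    segment ℝ (rayTail p k s d i) (rayTail p k s d (i + 1)) =
      (fun t : ℝ => p k + t • d) '' Icc (s i) (s (i + 1)) := by
  let f : ℝ →ᵃ[ℝ] V :=
    AffineMap.const ℝ ℝ (p k) + (LinearMap.toSpanSingleton ℝ V d).toAffineMap
  rw [rayTail_of_ge hki, rayTail_of_ge (hki.trans i.le_succ),
    ← segment_eq_Icc (hs.lt_succ i hki hin).le]
  exact (image_segment ℝ f _ _).symm

/-- The ray from `p k` in direction `d`, up to parameter `r`, meets the edges before `p k` in
`p k` only. -/
def IsClearRay (p : ℕ → V) (k : ℕ) (d : V) (r : ℝ) : Prop :=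
  ∀ i < k, ∀ t ∈ Icc 0 r, p k + t • d ∈ segment ℝ (p i) (p (i + 1)) → i + 1 = k ∧ t = 0

theorem IsClearRay.smul (h : IsClearRay p k d r) {c : ℝ} (hc0 : 0 < c) (hc1 : c ≤ 1) :
    IsClearRay p k (c • d) r := by
  intro i hi t ht hmem
  rw [smul_smul] at hmem
  have htc : t * c ∈ Icc 0 r :=
    ⟨mul_nonneg ht.1 hc0.le, (mul_le_of_le_one_right ht.1 hc1).trans ht.2⟩
  obtain ⟨hik, htc0⟩ := h i hi (t * c) htc hmem
  exact ⟨hik, (mul_eq_zero.mp htc0).resolve_right hc0.ne'⟩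

theorem IsSimpleChain.rayTail (hp : IsSimpleChain k p) (hs : IsTailProfile n k s) (hd : d ≠ 0)
    (hclear : IsClearRay p k d (s n)) : IsSimpleChain n (rayTail p k s d) where
  ne_succ i hi := by
    rcases lt_or_ge i k with hik | hki
    · rw [rayTail_of_le hs hik.le, rayTail_of_le hs hik]
      exact hp.ne_succ i hik
    · rw [rayTail_of_ge hki, rayTail_of_ge (hki.trans i.le_succ)]
      exact fun heq => (hs.lt_succ i hki hi).ne (smul_left_injective ℝ hd (add_left_cancel heq))
  eq_of_mem i j hij hj x hxi hxj := by
    rcases lt_or_ge j k with hjk | hkj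
    · simp only [rayTail_of_le hs hjk.le, rayTail_of_le hs hjk,
        rayTail_of_le hs (hij.trans hjk).le, rayTail_of_le hs (hij.trans hjk)] at hxi hxj ⊢
      exact hp.eq_of_mem i j hij hjk x hxi hxj
    · rw [segment_rayTail hs hkj hj] at hxj
      obtain ⟨t, ht, rfl⟩ := hxj
      have hsj : 0 ≤ s j := hs.zero k le_rfl ▸
        hs.strictMonoOn.monotoneOn ⟨le_rfl, hkj.trans hj.le⟩ ⟨hkj, hj.le⟩ hkj
      suffices i + 1 = j ∧ t = s j from ⟨this.1, by rw [rayTail_of_ge hkj, this.2]⟩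
      rcases lt_or_ge i k with hik | hki
      · have htn : t ≤ s n := ht.2.trans <|
          hs.strictMonoOn.monotoneOn ⟨by omega, hj⟩ ⟨by omega, le_rfl⟩ hj
        rw [rayTail_of_le hs hik.le, rayTail_of_le hs hik] at hxi
        obtain ⟨rfl, rfl⟩ := hclear i hik t ⟨hsj.trans ht.1, htn⟩ hxi
        have hsj0 : s j = 0 := le_antisymm ht.1 hsj
        refine ⟨hs.strictMonoOn.injOn ⟨le_rfl, by omega⟩ ⟨hkj, hj.le⟩ ?_, hsj0.symm⟩
        rw [hs.zero _ le_rfl, hsj0]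
      · rw [segment_rayTail hs hki (hij.trans hj)] at hxi
        obtain ⟨t', ht', heq⟩ := hxi
        obtain rfl : t' = t := smul_left_injective ℝ hd (add_left_cancel heq)
        have hle : s (i + 1) ≤ s j :=
          hs.strictMonoOn.monotoneOn ⟨by omega, by omega⟩ ⟨hkj, hj.le⟩ hij
        have hts : t' = s j := le_antisymm (ht'.2.trans hle) ht.1
        refine ⟨hs.strictMonoOn.injOn ⟨by omega, by omega⟩ ⟨hkj, hj.le⟩ ?_, hts⟩
        exact le_antisymm hle (hts ▸ ht'.2)

theorem exists_mem_Icc_succ {α : Type*} [LinearOrder α] {f : ℕ → α} (hkn : k < n) {x : α}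
    (hx : x ∈ Icc (f k) (f n)) : ∃ i, k ≤ i ∧ i < n ∧ x ∈ Icc (f i) (f (i + 1)) := by
  induction n, hkn using Nat.le_induction with
  | base => exact ⟨k, le_rfl, k.lt_succ_self, hx⟩
  | succ n hkn ih =>
    rcases le_total x (f n) with hxn | hxn
    · obtain ⟨i, hki, hin, hi⟩ := ih ⟨hx.1, hxn⟩
      exact ⟨i, hki, hin.trans n.lt_succ_self, hi⟩
    · exact ⟨n, by omega, n.lt_succ_self, hxn, hx.2⟩

theorem isSimpleChain_of_rayTail (hs : IsTailProfile n k s)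
    (h : IsSimpleChain n (rayTail p k s d)) (hkn : k ≤ n) : IsSimpleChain k p :=
  (h.mono hkn).congr fun _ => rayTail_of_le hs

theorem ne_zero_of_isSimpleChain_rayTail (h : IsSimpleChain n (rayTail p k s d)) (hkn : k < n) :
    d ≠ 0 := by
  rintro rfl
  exact h.ne_succ k hkn (by simp [rayTail])

theorem isClearRay_of_isSimpleChain_rayTail (hs : IsTailProfile n k s)
    (h : IsSimpleChain n (rayTail p k s d)) (hkn : k < n) : IsClearRay p k d (s n) := by
  intro i hik t ht hmem
  obtain ⟨j, hkj, hjn, htj⟩ := exists_mem_Icc_succ hkn (hs.zero k le_rfl ▸ ht)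
  have hi : p k + t • d ∈ segment ℝ (rayTail p k s d i) (rayTail p k s d (i + 1)) := by
    rwa [rayTail_of_le hs hik.le, rayTail_of_le hs hik]
  have hj : p k + t • d ∈ segment ℝ (rayTail p k s d j) (rayTail p k s d (j + 1)) := by
    rw [segment_rayTail hs hkj hjn]
    exact mem_image_of_mem _ htj
  obtain ⟨rfl, hx⟩ := h.eq_of_mem i j (hik.trans_le hkj) hjn _ hi hj
  obtain rfl : k = i + 1 := by omega
  rw [rayTail_of_le hs le_rfl, add_eq_left] at hx
  exact ⟨rfl, (smul_eq_zero.mp hx).resolve_right (ne_zero_of_isSimpleChain_rayTail h hkn)⟩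

theorem sameRay_of_smul_left {x y : V} {c : ℝ} (hc : 0 < c) (h : SameRay ℝ (c • x) y) :
    SameRay ℝ x y := by
  simpa only [inv_smul_smul₀ hc.ne'] using h.pos_smul_left (inv_pos.mpr hc)

theorem starConvex_setOf_not_sameRay_neg (he : e ≠ 0) {c : ℝ} (hc : 0 < c) :
    StarConvex ℝ (c • e) {d | ¬SameRay ℝ d (-e)} := by
  intro d hd a b ha hb hab hray
  rcases hb.eq_or_lt with rfl | hb
  · obtain rfl : a = 1 := by linarith
    rw [one_smul, zero_smul, add_zero, sameRay_neg_smul_left_iff] at hray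
    exact hray.elim hc.not_ge he
  · have hback : SameRay ℝ ((a * c) • -e) (-e) :=
      SameRay.sameRay_nonneg_smul_left (-e) (mul_nonneg ha hc.le)
    have hbd : SameRay ℝ (b • d) (-e) := by
      convert hray.add_left hback using 1
      module
    exact hd (sameRay_of_smul_left hb hbd)

theorem not_sameRay_of_isClearRay (h : IsClearRay p (k + 1) d r) (hr : 0 < r) (hd : d ≠ 0)
    (hne : p k ≠ p (k + 1)) : ¬SameRay ℝ d (p k - p (k + 1)) := by
  intro hray
  obtain ⟨a, b, ha, hb, hab⟩ := hray.exists_pos hd (sub_ne_zero.mpr hne)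
  set t := min r (a / b)
  have ht : 0 < t := lt_min hr (div_pos ha hb)
  have hmem : p (k + 1) + t • d ∈ segment ℝ (p k) (p (k + 1)) := by
    rw [segment_symm, segment_eq_image']
    refine ⟨t * (b / a), ⟨by positivity, ?_⟩, ?_⟩
    · exact (mul_le_mul_of_nonneg_right (min_le_right _ _) (by positivity)).trans_eq (by field_simp)
    · have hd' : d = (b / a) • (p k - p (k + 1)) := by
        rw [div_eq_inv_mul, mul_smul, ← hab, inv_smul_smul₀ ha.ne']
      dsimp only
      rw [mul_smul, ← hd']
  exact ht.ne' (h k k.lt_succ_self t ⟨ht.le, min_le_left _ _⟩ hmem).2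

theorem isClearRay_succ_of_not_sameRay (hd : ¬SameRay ℝ d (p k - p (k + 1)))
    (h : ∀ i < k, ∀ t ∈ Icc 0 r, p (k + 1) + t • d ∉ segment ℝ (p i) (p (i + 1))) :
    IsClearRay p (k + 1) d r := by
  intro i hi t ht hmem
  rcases (Nat.lt_succ_iff.mp hi).eq_or_lt with rfl | hik
  · refine ⟨rfl, ht.1.eq_or_lt.resolve_right (fun ht0 => hd ?_) |>.symm⟩
    rw [segment_symm, segment_eq_image'] at hmem
    obtain ⟨c, hc, heq⟩ := hmem
    exact sameRay_of_smul_left ht0 (add_left_cancel heq ▸ SameRay.sameRay_nonneg_smul_left _ hc.1)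
  · exact absurd hmem (h i hik t ht)

end RayTail

section Lengthening

variable {V : Type*} [NormedAddCommGroup V] [NormedSpace ℝ V]
  {n k : ℕ} {l s : ℕ → ℝ} {p q : ℕ → V} {d e : V}

/-- The simple chains with `n` edges whose `i`-th edge has length at most `l i`. -/
def chainsOfLengthLE (n : ℕ) (l : ℕ → ℝ) : Set (ℕ → V) :=
  {p | IsSimpleChain n p ∧ ∀ i < n, ‖p (i + 1) - p i‖ ≤ l i}

theorem mem_chainsOfLengthLE_of_eq (hp : p ∈ chainsOfLengthLE n l) (h : ∀ i ≤ n, p i = q i) :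
    q ∈ chainsOfLengthLE n l :=
  ⟨hp.1.congr h, fun i hi => h (i + 1) hi ▸ h i hi.le ▸ hp.2 i hi⟩

theorem joinedIn_chainsOfLengthLE_of_eq (hp : p ∈ chainsOfLengthLE n l)
    (h : ∀ i ≤ n, p i = q i) : JoinedIn (chainsOfLengthLE n l) p q := by
  refine JoinedIn.of_segment_subset ?_
  rintro _ ⟨a, b, -, -, hab, rfl⟩
  exact mem_chainsOfLengthLE_of_eq hp fun i hi => by
    simp only [Pi.add_apply, Pi.smul_apply, ← h i hi, Convex.combo_self hab]

theorem norm_rayTail_succ_sub (hs : IsTailProfile n k s) {i : ℕ} (hki : k ≤ i) (hin : i < n) :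
    ‖rayTail p k s d (i + 1) - rayTail p k s d i‖ = (s (i + 1) - s i) * ‖d‖ := by
  rw [rayTail_of_ge hki, rayTail_of_ge (hki.trans i.le_succ), add_sub_add_left_eq_sub,
    ← sub_smul, norm_smul, Real.norm_of_nonneg (sub_nonneg.mpr (hs.lt_succ i hki hin).le)]

theorem rayTail_mem_of_isClearRay (hs : IsTailProfile n k s) (hkn : k ≤ n)
    (h : rayTail p k s d ∈ chainsOfLengthLE n l) (he : e ≠ 0) (hclear : IsClearRay p k e (s n))
    (hlen : ∀ i, k ≤ i → i < n → (s (i + 1) - s i) * ‖e‖ ≤ l i) :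
    rayTail p k s e ∈ chainsOfLengthLE n l := by
  refine ⟨(isSimpleChain_of_rayTail hs h.1 hkn).rayTail hs he hclear, fun i hi => ?_⟩
  rcases lt_or_ge i k with hik | hki
  · simpa only [rayTail_of_le hs hik.le, rayTail_of_le hs hik] using h.2 i hi
  · exact (norm_rayTail_succ_sub hs hki hi).trans_le (hlen i hki hi)

theorem joinedIn_rayTail {F : Set (ℕ → V)} (h : ∀ x ∈ segment ℝ d e, rayTail p k s x ∈ F) :
    JoinedIn F (rayTail p k s d) (rayTail p k s e) := by
  have hcont : Continuous (rayTail p k s) := by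
    unfold rayTail
    fun_prop
  exact ((JoinedIn.of_segment_subset (Subset.refl _)).map hcont).mono (image_subset_iff.mpr h)

theorem joinedIn_rayTail_smul (hs : IsTailProfile n k s) (hkn : k < n)
    (h : rayTail p k s d ∈ chainsOfLengthLE n l) {c : ℝ} (hc0 : 0 < c) (hc1 : c ≤ 1) :
    JoinedIn (chainsOfLengthLE n l) (rayTail p k s d) (rayTail p k s (c • d)) := by
  refine joinedIn_rayTail ?_
  rintro _ ⟨a, b, ha, hb, hab, rfl⟩
  have hσ0 : 0 < a + b * c := by
    rcases hb.eq_or_lt with rfl | hb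
    · linarith
    · positivity
  have hσ1 : a + b * c ≤ 1 := by nlinarith
  rw [smul_smul, ← add_smul]
  refine rayTail_mem_of_isClearRay hs hkn.le h
    (smul_ne_zero hσ0.ne' (ne_zero_of_isSimpleChain_rayTail h.1 hkn))
    ((isClearRay_of_isSimpleChain_rayTail hs h.1 hkn).smul hσ0 hσ1) fun i hki hin => ?_
  have hnonneg := sub_nonneg.mpr (hs.lt_succ i hki hin).le
  calc (s (i + 1) - s i) * ‖(a + b * c) • d‖
      ≤ (s (i + 1) - s i) * ‖d‖ := by
        rw [norm_smul, Real.norm_of_nonneg hσ0.le]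
        gcongr
        exact mul_le_of_le_one_left (norm_nonneg d) hσ1
    _ ≤ l i := norm_rayTail_succ_sub (p := p) hs hki hin ▸ h.2 i hin

theorem eventually_add_smul_notMem {C : Set V} (hC : IsClosed C) {b : V} (hb : b ∉ C) (r : ℝ) :
    ∀ᶠ y in 𝓝 (0 : V), ∀ t ∈ Icc 0 r, b + t • y ∉ C := by
  refine isCompact_Icc.eventually_forall_of_forall_eventually fun t _ => ?_
  have hcont : Continuous fun z : V × ℝ => b + z.2 • z.1 := by fun_prop
  exact hcont.continuousAt.eventually (hC.isOpen_compl.mem_nhds (by simpa using hb))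

theorem eventually_rayTail_mem (hs : IsTailProfile n (k + 1) s) (hkn : k + 1 ≤ n)
    (hl : ∀ i < n, 0 < l i) (h : rayTail p (k + 1) s d ∈ chainsOfLengthLE n l) :
    ∀ᶠ y in 𝓝 (0 : V), ¬SameRay ℝ y (p k - p (k + 1)) →
      rayTail p (k + 1) s y ∈ chainsOfLengthLE n l := by
  have hp : IsSimpleChain (k + 1) p := isSimpleChain_of_rayTail hs h.1 hkn
  have hclear : ∀ᶠ y in 𝓝 (0 : V), ∀ i ∈ Iio k, ∀ t ∈ Icc 0 (s n),
      p (k + 1) + t • y ∉ segment ℝ (p i) (p (i + 1)) := by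
    refine (eventually_all_finite (finite_Iio k)).mpr fun i hi => ?_
    have hpk : p (k + 1) ∉ segment ℝ (p i) (p (i + 1)) := fun hmem =>
      hp.ne_succ k k.lt_succ_self
        (hp.eq_of_mem i k hi k.lt_succ_self _ hmem (right_mem_segment ℝ _ _)).2.symm
    refine eventually_add_smul_notMem ?_ hpk (s n)
    rw [← convexHull_pair]
    exact (toFinite _).isClosed_convexHull ℝ
  have hlen : ∀ᶠ y in 𝓝 (0 : V), ∀ i ∈ Iio n, (s (i + 1) - s i) * ‖y‖ ≤ l i := by
    refine (eventually_all_finite (finite_Iio n)).mpr fun i hi => ?_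
    have hcont : Continuous fun y : V => (s (i + 1) - s i) * ‖y‖ := by fun_prop
    exact (hcont.tendsto' 0 0 (by simp)).eventually_le_const (hl i hi)
  filter_upwards [hclear, hlen] with y hclear hlen hy
  refine rayTail_mem_of_isClearRay hs hkn h ?_ (isClearRay_succ_of_not_sameRay hy hclear)
    fun i _ hi => hlen i hi
  rintro rfl
  exact hy (SameRay.zero_left _)

theorem exists_joinedIn_rayTail_turn (hs : IsTailProfile n (k + 1) s) (hkn : k + 1 < n)
    (hl : ∀ i < n, 0 < l i) (h : rayTail p (k + 1) s d ∈ chainsOfLengthLE n l) :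
    ∃ c : ℝ, 0 < c ∧ JoinedIn (chainsOfLengthLE n l) (rayTail p (k + 1) s d)
      (rayTail p (k + 1) s (c • (p (k + 1) - p k))) := by
  set e := p (k + 1) - p k
  have hne : p k ≠ p (k + 1) := (isSimpleChain_of_rayTail hs h.1 hkn.le).ne_succ k k.lt_succ_self
  have hback : p k - p (k + 1) = -e := (neg_sub _ _).symm
  have hd : ¬SameRay ℝ d (-e) := by
    have hsn : 0 < s n := hs.zero _ le_rfl ▸
      hs.strictMonoOn ⟨le_rfl, hkn.le⟩ ⟨hkn.le, le_rfl⟩ hkn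
    exact hback ▸ not_sameRay_of_isClearRay (isClearRay_of_isSimpleChain_rayTail hs h.1 hkn) hsn
      (ne_zero_of_isSimpleChain_rayTail h.1 hkn) hne
  obtain ⟨ρ, hρ, hball⟩ := Metric.eventually_nhds_iff_ball.mp
    (eventually_rayTail_mem hs hkn.le hl h)
  have hsmall : ∀ x : V, ∀ᶠ c in 𝓝[>] (0 : ℝ), c • x ∈ Metric.ball 0 ρ := fun x =>
    ((continuous_id.smul continuous_const).tendsto' 0 0 (zero_smul ℝ x)).mono_left
      nhdsWithin_le_nhds |>.eventually (Metric.ball_mem_nhds 0 hρ)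
  obtain ⟨c, ⟨⟨hcd, hce⟩, hc1⟩, hc0⟩ := (((hsmall d).and (hsmall e)).and
    (nhdsWithin_le_nhds (Iic_mem_nhds one_pos))).and self_mem_nhdsWithin |>.exists
  have hcd' : ¬SameRay ℝ (c • d) (-e) := hd ∘ sameRay_of_smul_left hc0
  have hshrink := joinedIn_rayTail_smul hs hkn h hc0 hc1
  refine ⟨c, hc0, hshrink.trans (joinedIn_rayTail fun x hx => ?_)⟩
  refine hball x ((convex_ball 0 ρ).segment_subset hcd hce hx) ?_
  rw [hback]
  have he0 : e ≠ 0 := sub_ne_zero.mpr hne.symm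
  exact (starConvex_setOf_not_sameRay_neg he0 hc0).segment_subset hcd'
    (segment_symm ℝ (c • d) (c • e) ▸ hx)

theorem exists_joinedIn_rayTail_pred (hs : IsTailProfile n (k + 1) s) (hkn : k + 1 < n)
    (hl : ∀ i < n, 0 < l i) (h : rayTail p (k + 1) s d ∈ chainsOfLengthLE n l) :
    ∃ s', IsTailProfile n k s' ∧ JoinedIn (chainsOfLengthLE n l)
      (rayTail p (k + 1) s d) (rayTail p k s' (p (k + 1) - p k)) := by
  obtain ⟨c, hc, hjoin⟩ := exists_joinedIn_rayTail_turn hs hkn hl h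
  refine ⟨fun i => if i ≤ k then 0 else 1 + c * s i, ⟨fun i hi => if_pos hi, ?_⟩, ?_⟩
  · intro i hki hin
    rcases hki.eq_or_lt with rfl | hki
    · simp [hs.zero (k + 1) le_rfl]
    · simpa [hki.not_ge, (hki.trans i.lt_succ_self).not_ge, hc] using hs.lt_succ i hki hin
  · convert hjoin using 1
    funext i
    rcases le_or_gt i k with hik | hki
    · simp [rayTail, hik, hik.trans k.le_succ, hs.zero i (hik.trans k.le_succ)]
    · rw [rayTail_of_ge hki.le, rayTail_of_ge hki, if_neg hki.not_ge]
      module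

theorem exists_joinedIn_rayTail_zero (hn : 1 ≤ n) (hl : ∀ i < n, 0 < l i)
    (hp : p ∈ chainsOfLengthLE n l) :
    ∃ s d, IsTailProfile n 0 s ∧ JoinedIn (chainsOfLengthLE n l) p (rayTail p 0 s d) := by
  obtain ⟨m, rfl⟩ := Nat.exists_eq_add_of_le' hn
  refine Nat.decreasingInduction' (m := 0) (n := m) (P := fun k => ∃ s d,
    IsTailProfile (m + 1) k s ∧ JoinedIn (chainsOfLengthLE (m + 1) l) p (rayTail p k s d))
    ?_ m.zero_le ?_
  · rintro k hk - ⟨s, d, hs, hjoin⟩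
    obtain ⟨s', hs', hjoin'⟩ := exists_joinedIn_rayTail_pred hs (by omega) hl hjoin.target_mem
    exact ⟨s', _, hs', hjoin.trans hjoin'⟩
  · have hs : IsTailProfile (m + 1) m fun i => ((i - m : ℕ) : ℝ) :=
      ⟨fun i hi => by simp [hi], fun i hi _ => by simp [Nat.succ_sub hi]⟩
    refine ⟨_, p (m + 1) - p m, hs, joinedIn_chainsOfLengthLE_of_eq hp fun i hi => ?_⟩
    rcases hi.eq_or_lt with rfl | hi
    · simp [rayTail]
    · rw [rayTail_of_le hs (Nat.lt_succ_iff.mp hi)]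

theorem convex_setOf_isTailProfile (n k : ℕ) : Convex ℝ {s | IsTailProfile n k s} := by
  intro a ha b hb x y hx hy hxy
  refine ⟨fun i hi => by simp [ha.zero i hi, hb.zero i hi], fun i hki hin => ?_⟩
  have hpos := convex_Ioi (0 : ℝ) (sub_pos.mpr (ha.lt_succ i hki hin))
    (sub_pos.mpr (hb.lt_succ i hki hin)) hx hy hxy
  simp only [smul_eq_mul, mem_Ioi] at hpos
  simp only [Pi.add_apply, Pi.smul_apply, smul_eq_mul]
  linarith

theorem convex_setOf_succ_sub_le (n : ℕ) (l : ℕ → ℝ) :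
    Convex ℝ {s : ℕ → ℝ | ∀ i < n, s (i + 1) - s i ≤ l i} := by
  intro a ha b hb x y hx hy hxy i hi
  have hle := convex_Iic (l i) (ha i hi) (hb i hi) hx hy hxy
  simp only [smul_eq_mul, mem_Iic] at hle
  simp only [Pi.add_apply, Pi.smul_apply, smul_eq_mul]
  linarith

theorem rayTail_zero_mem (hs : IsTailProfile n 0 s) (hsl : ∀ i < n, s (i + 1) - s i ≤ l i)
    (hd : ‖d‖ = 1) : rayTail p 0 s d ∈ chainsOfLengthLE n l := by
  have hp : IsSimpleChain 0 p := ⟨by simp, by simp⟩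
  have hd0 : d ≠ 0 := norm_ne_zero_iff.mp (hd.trans_ne one_ne_zero)
  refine ⟨hp.rayTail hs hd0 fun i hi => absurd hi i.not_lt_zero, fun i hi => ?_⟩
  rw [norm_rayTail_succ_sub hs i.zero_le hi, hd, mul_one]
  exact hsl i hi

theorem joinedIn_rayTail_zero {a b : ℕ → ℝ} (hd : ‖d‖ = 1)
    (ha : IsTailProfile n 0 a) (hal : ∀ i < n, a (i + 1) - a i ≤ l i)
    (hb : IsTailProfile n 0 b) (hbl : ∀ i < n, b (i + 1) - b i ≤ l i) :
    JoinedIn (chainsOfLengthLE n l) (rayTail p 0 a d) (rayTail p 0 b d) := by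
  have hcont : Continuous fun s => rayTail p 0 s d := by
    unfold rayTail
    fun_prop
  have hconv := (convex_setOf_isTailProfile n 0).inter (convex_setOf_succ_sub_le n l)
  exact ((JoinedIn.of_segment_subset (hconv.segment_subset ⟨ha, hal⟩ ⟨hb, hbl⟩)).map hcont).mono
    (image_subset_iff.mpr fun _ hs => rayTail_zero_mem hs.1 hs.2 hd)

theorem exists_joinedIn_straight (hn : 1 ≤ n) (hl : ∀ i < n, 0 < l i)
    (hp : p ∈ chainsOfLengthLE n l) :
    ∃ c u : V, ‖u‖ = 1 ∧ JoinedIn (chainsOfLengthLE n l) p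
      fun i => c + (∑ j ∈ Finset.range i, l j) • u := by
  obtain ⟨s, d, hs, hjoin⟩ := exists_joinedIn_rayTail_zero hn hl hp
  have hd0 : d ≠ 0 := ne_zero_of_isSimpleChain_rayTail hjoin.target_mem.1 hn
  have hd : 0 < ‖d‖ := norm_pos_iff.mpr hd0
  have hunit : rayTail p 0 s d = rayTail p 0 (fun i => s i * ‖d‖) (‖d‖⁻¹ • d) := by
    funext i
    simp only [rayTail, smul_smul, mul_inv_cancel_right₀ hd.ne']
  have hfull : (fun i => p 0 + (∑ j ∈ Finset.range i, l j) • ‖d‖⁻¹ • d) =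
      rayTail p 0 (fun i => ∑ j ∈ Finset.range i, l j) (‖d‖⁻¹ • d) :=
    funext fun i => by rw [rayTail_of_ge i.zero_le]
  have hu : ‖‖d‖⁻¹ • d‖ = 1 := norm_smul_inv_norm (𝕜 := ℝ) hd0
  refine ⟨p 0, ‖d‖⁻¹ • d, hu, hjoin.trans ?_⟩
  rw [hunit, hfull]
  refine joinedIn_rayTail_zero hu ⟨fun i hi => ?_, fun i _ hin => ?_⟩ (fun i hi => ?_)
    ⟨fun i hi => ?_, fun i _ hin => ?_⟩ fun i _ => ?_
  · rw [hs.zero i hi, zero_mul]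
  · exact mul_lt_mul_of_pos_right (hs.lt_succ i i.zero_le hin) hd
  · rw [← sub_mul, ← norm_rayTail_succ_sub (p := p) hs i.zero_le hi]
    exact hjoin.target_mem.2 i hi
  · rw [Nat.le_zero.mp hi, Finset.sum_range_zero]
  · rw [Finset.sum_range_succ]
    exact lt_add_of_pos_right _ (hl i hin)
  · rw [Finset.sum_range_succ, add_sub_cancel_left]

end Lengthening

section Lifting

open Submodule

variable {E : Type*} [NormedAddCommGroup E] [InnerProductSpace ℝ E] {n : ℕ} {l : ℕ → ℝ} {v : ℕ → E}
  {K : Submodule ℝ E} {y : Kᗮ} {e : ℕ → Kᗮ} {r : ℕ → K}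

/-- The simple chains with `n` edges of lengths `l 0, …, l (n - 1)`. -/
def chainsOfLength (n : ℕ) (l : ℕ → ℝ) : Set (ℕ → E) :=
  {p | IsSimpleChain n p ∧ ∀ i < n, ‖p (i + 1) - p i‖ = l i}

/-- The counterpart of `CanBeStraightened` in an arbitrary real inner product space, with motions
as paths in the space of vertex sequences. -/
def IsStraightenable (n : ℕ) (v : ℕ → E) : Prop :=
  ∃ o u : E, ‖u‖ = 1 ∧ JoinedIn (chainsOfLength n fun i => ‖v (i + 1) - v i‖) v
    fun i => o + (∑ j ∈ Finset.range i, ‖v (j + 1) - v j‖) • u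

/-- The chain over the chain `r` in `K` that starts at height `y` and whose `i`-th edge has vertical
component a nonnegative multiple of the unit vector `e i`, chosen to make its length `l i`. If edge
`i` of `r` is longer than `l i`, its lift is horizontal (`√` is `0` on negative numbers). -/
def liftChain (l : ℕ → ℝ) (y : Kᗮ) (e : ℕ → Kᗮ) (r : ℕ → K) : ℕ → E := fun i =>
  r i + (y + ∑ j ∈ Finset.range i, √(l j ^ 2 - ‖r (j + 1) - r j‖ ^ 2) • e j : Kᗮ)

theorem liftChain_succ_sub (i : ℕ) : liftChain l y e r (i + 1) - liftChain l y e r i =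
    (r (i + 1) - r i : K) + (√(l i ^ 2 - ‖r (i + 1) - r i‖ ^ 2) • e i : Kᗮ) := by
  simp only [liftChain, Finset.sum_range_succ, Submodule.coe_add, Submodule.coe_sub]
  abel

theorem norm_liftChain_succ_sub {i : ℕ} (he : ‖e i‖ = 1) (hr : ‖r (i + 1) - r i‖ ≤ l i) :
    ‖liftChain l y e r (i + 1) - liftChain l y e r i‖ = l i := by
  have hl : 0 ≤ l i := (norm_nonneg _).trans hr
  have hsq : ‖r (i + 1) - r i‖ ^ 2 ≤ l i ^ 2 := by gcongr
  rw [liftChain_succ_sub, ← sq_eq_sq₀ (norm_nonneg _) hl, sq,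
    norm_add_sq_eq_norm_sq_add_norm_sq_real (inner_right_of_mem_orthogonal (coe_mem _) (coe_mem _)),
    ← sq, ← sq, norm_coe, norm_coe, norm_smul, he, mul_one,
    Real.norm_of_nonneg (Real.sqrt_nonneg _), Real.sq_sqrt (sub_nonneg.mpr hsq), add_sub_cancel]

theorem continuous_liftChain (l : ℕ → ℝ) (y : Kᗮ) (e : ℕ → Kᗮ) : Continuous (liftChain l y e) := by
  unfold liftChain
  fun_prop

theorem liftChain_straight {o u : K} (hu : ‖u‖ = 1) :
    liftChain l y e (fun i => o + (∑ j ∈ Finset.range i, l j) • u) =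
      fun i => (o + y : E) + (∑ j ∈ Finset.range i, l j) • (u : E) := by
  have hflat : ∀ j, √(l j ^ 2 - ‖(o + (∑ j ∈ Finset.range (j + 1), l j) • u) -
      (o + (∑ j ∈ Finset.range j, l j) • u)‖ ^ 2) = 0 := fun j => by
    rw [add_sub_add_left_eq_sub, ← sub_smul, Finset.sum_range_succ, add_sub_cancel_left,
      norm_smul, hu, mul_one, Real.norm_eq_abs, sq_abs, sub_self, Real.sqrt_zero]
  funext i
  simp only [liftChain, hflat, zero_smul, Finset.sum_const_zero, add_zero, Submodule.coe_add,
    Submodule.coe_smul]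
  abel

theorem exists_norm_eq_one_smul_eq {F : Type*} [NormedAddCommGroup F] [NormedSpace ℝ F]
    [Nontrivial F] (x : F) : ∃ e : F, ‖e‖ = 1 ∧ ‖x‖ • e = x := by
  rcases eq_or_ne x 0 with rfl | hx
  · obtain ⟨e, he⟩ := exists_norm_eq F zero_le_one
    exact ⟨e, he, by rw [norm_zero, zero_smul]⟩
  · exact ⟨‖x‖⁻¹ • x, norm_smul_inv_norm (𝕜 := ℝ) hx, smul_inv_smul₀ (norm_ne_zero_iff.mpr hx) x⟩

variable [K.HasOrthogonalProjection]

theorem orthogonalProjectionOnto_liftChain (i : ℕ) :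
    K.orthogonalProjectionOnto (liftChain l y e r i) = r i := by
  rw [liftChain, map_add, orthogonalProjectionOnto_mem_subspace_eq_self,
    orthogonalProjectionOnto_apply_of_mem_orthogonal (Subtype.prop _), add_zero]

theorem mapsTo_liftChain (he : ∀ i, ‖e i‖ = 1) :
    MapsTo (liftChain l y e) (chainsOfLengthLE n l) (chainsOfLength n l) := fun _ hr =>
  ⟨.of_map K.orthogonalProjectionOnto.toLinearMap.toAffineMap <|
    hr.1.congr fun i _ => (orthogonalProjectionOnto_liftChain i).symm,
    fun i hi => norm_liftChain_succ_sub (he i) (hr.2 i hi)⟩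

theorem liftChain_orthogonalProjectionOnto
    (he : ∀ i, ‖Kᗮ.orthogonalProjectionOnto (v (i + 1) - v i)‖ • e i =
      Kᗮ.orthogonalProjectionOnto (v (i + 1) - v i)) :
    liftChain (fun i => ‖v (i + 1) - v i‖) (Kᗮ.orthogonalProjectionOnto (v 0)) e
      (fun i => K.orthogonalProjectionOnto (v i)) = v := by
  have hvert : ∀ i, √(‖v (i + 1) - v i‖ ^ 2 - ‖K.orthogonalProjectionOnto (v (i + 1)) -
      K.orthogonalProjectionOnto (v i)‖ ^ 2) • e i =
        Kᗮ.orthogonalProjectionOnto (v (i + 1)) - Kᗮ.orthogonalProjectionOnto (v i) := fun i => by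
    rw [norm_sq_eq_add_norm_sq_projection _ K, ← map_sub, add_sub_cancel_left,
      Real.sqrt_sq (norm_nonneg _), he, map_sub]
  funext i
  simp only [liftChain, hvert]
  rw [Finset.sum_range_sub fun i => Kᗮ.orthogonalProjectionOnto (v i), add_sub_cancel]
  exact K.starProjection_add_starProjection_orthogonal (v i)

end Lifting

section EuclideanSpace

variable {n : ℕ} {v : ℕ → E3}

theorem isSimpleOpenChain_iff : IsSimpleOpenChain n v ↔ 1 ≤ n ∧ IsSimpleChain n v := by
  refine and_congr_right fun _ => ⟨fun ⟨hne, hinter⟩ => ⟨fun i hi => ?_, ?_⟩, fun h => ⟨?_, ?_⟩⟩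
  · exact hne i (i + 1) hi.le hi i.lt_succ_self.ne
  · intro i j hij hj x hxi hxj
    have hx := hinter i j hij hj ▸ mem_inter hxi hxj
    split_ifs at hx with hij'
    exacts [⟨hij', hx⟩, hx.elim]
  · intro i j hi hj hij
    rcases hij.lt_or_gt with hij | hij
    exacts [h.ne hij hj, (h.ne hij hi).symm]
  · intro i j hij hj
    split_ifs with hij'
    · subst hij'
      exact Subset.antisymm (fun x hx => (h.eq_of_mem _ _ hij hj x hx.1 hx.2).2)
        (singleton_subset_iff.mpr ⟨right_mem_segment ℝ _ _, left_mem_segment ℝ _ _⟩)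
    · exact eq_empty_of_forall_notMem fun x hx => hij' (h.eq_of_mem i j hij hj x hx.1 hx.2).1

theorem HasSimpleOrthogonalProjection.exists_isSimpleChain
    (h : HasSimpleOrthogonalProjection n v) : ∃ K : Submodule ℝ E3, K ≠ ⊤ ∧
      IsSimpleChain n fun i => K.orthogonalProjectionOnto (v i) := by
  obtain ⟨S, w, hdim, hw, hsimple⟩ := h
  refine ⟨S.direction, ?_, ?_⟩
  · intro htop
    rw [htop, finrank_top, finrank_euclideanSpace_fin] at hdim
    omega
  let f : S.direction →ᵃ[ℝ] E3 :=
    S.direction.subtype.toAffineMap +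
      AffineMap.const ℝ _ (w 0 - S.direction.orthogonalProjectionOnto (v 0))
  refine .of_map f ((isSimpleOpenChain_iff.mp hsimple).2.congr fun i hi => ?_)
  have hproj : ∀ i ≤ n, S.direction.orthogonalProjectionOnto (v i) =
      S.direction.orthogonalProjectionOnto (w i) := fun i hi => by
    rw [← sub_eq_zero, ← map_sub]
    exact Submodule.orthogonalProjectionOnto_apply_of_mem_orthogonal (hw i hi).2
  have hdiff : w i - w 0 ∈ S.direction :=
    AffineSubspace.vsub_mem_direction (hw i hi).1 (hw 0 n.zero_le).1
  have hself := congrArg Subtype.val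
    (Submodule.orthogonalProjectionOnto_mem_subspace_eq_self (⟨w i - w 0, hdiff⟩ : S.direction))
  simp only [map_sub, Submodule.coe_sub] at hself
  change w i = (S.direction.orthogonalProjectionOnto (v i) : E3) +
    (w 0 - S.direction.orthogonalProjectionOnto (v 0))
  rw [hproj i hi, hproj 0 n.zero_le, add_sub_left_comm, hself, add_sub_cancel]

theorem IsStraightenable.canBeStraightened (hn : 1 ≤ n) (h : IsStraightenable n v) :
    CanBeStraightened n v := by
  obtain ⟨o, u, hu, hjoin⟩ := h
  let γ := hjoin.somePath
  have hmem : ∀ t, γ.extend t ∈ chainsOfLength n fun i => ‖v (i + 1) - v i‖ := fun t =>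
    hjoin.somePath_mem _
  refine ⟨γ.extend, ⟨fun i _ => ?_, fun i _ => ?_, fun t _ => ?_, fun t _ => (hmem t).2⟩,
    o, u, hu, fun i _ => ?_⟩
  · exact ((continuous_apply i).comp γ.continuous_extend).continuousOn
  · rw [γ.extend_zero]
  · exact isSimpleOpenChain_iff.mpr ⟨hn, (hmem t).1⟩
  · rw [γ.extend_one]

end EuclideanSpace

theorem straightenable_of_simple_orthogonal_projection_general {E : Type*}
    [NormedAddCommGroup E] [InnerProductSpace ℝ E] {K : Submodule ℝ E} [K.HasOrthogonalProjection]
    (hK : K ≠ ⊤) {n : ℕ} (hn : 1 ≤ n) {v : ℕ → E}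
    (hproj : IsSimpleChain n fun i => K.orthogonalProjectionOnto (v i)) : IsStraightenable n v := by
  have : Nontrivial Kᗮ :=
    Submodule.nontrivial_iff_ne_bot.mpr (mt Submodule.orthogonal_eq_bot_iff.mp hK)
  choose e he hev using fun i =>
    exists_norm_eq_one_smul_eq (Kᗮ.orthogonalProjectionOnto (v (i + 1) - v i))
  have hmem : (fun i => K.orthogonalProjectionOnto (v i)) ∈
      chainsOfLengthLE n fun i => ‖v (i + 1) - v i‖ :=
    ⟨hproj, fun i _ => by rw [← map_sub]; exact K.norm_orthogonalProjectionOnto_apply_le _⟩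
  have hpos : ∀ i < n, 0 < ‖v (i + 1) - v i‖ := fun i hi =>
    norm_sub_pos_iff.mpr fun heq => hproj.ne_succ i hi (congrArg _ heq.symm)
  obtain ⟨o, u, hu, hjoin⟩ := exists_joinedIn_straight hn hpos hmem
  have hlift := (hjoin.map (continuous_liftChain _ (Kᗮ.orthogonalProjectionOnto (v 0)) e)).mono
    (mapsTo_liftChain he).image_subset
  rw [liftChain_orthogonalProjectionOnto hev, liftChain_straight hu] at hlift
  exact ⟨_, u, hu, hlift⟩

/-- A simple open polygonal chain in ℝ³ with a simple orthogonal
projection onto some plane can be straightened. -/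
theorem straightenable_of_simple_orthogonal_projection (n : ℕ) (v : ℕ → E3)
    (hsimple : IsSimpleOpenChain n v)
    (hproj : HasSimpleOrthogonalProjection n v) :
    CanBeStraightened n v := by
  obtain ⟨K, hK, hKv⟩ := hproj.exists_isSimpleChain
  exact (straightenable_of_simple_orthogonal_projection_general hK hsimple.1 hKv).canBeStraightened
    hsimple.1
end
end

section
/- Every simple open polygonal chain contained in a plane of ℝ³ can be straightened by a motion in ℝ³, i.e., there is a continuous, simplicity-preserving, edge-length-preserving deformation in ℝ³ taking it to a straight configuration. -/
noncomputable section

/-!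
A chain along which some affine function is strictly increasing is simple: that function separates
any two edges, apart from the common vertex of consecutive ones. Now turn all edges of a planar
chain at once towards a unit normal `u` of the plane, keeping their lengths. At every positive time
each edge climbs in the direction `u`, so the chain is simple, and at the end all edges point in the
direction `u`.
-/

section Height

variable {𝕜 E : Type*} [Field 𝕜] [LinearOrder 𝕜] [IsStrictOrderedRing 𝕜]
  [AddCommGroup E] [Module 𝕜 E] {f : E →ᵃ[𝕜] 𝕜} {a b c d x : E}

theorem apply_mem_Icc_of_mem_segment (hab : f a ≤ f b) (hx : x ∈ segment 𝕜 a b) :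
    f x ∈ Set.Icc (f a) (f b) := by
  rw [← segment_eq_Icc hab, ← image_segment]
  exact Set.mem_image_of_mem f hx

theorem eq_right_of_mem_segment_of_apply_eq (hab : f a ≠ f b) (hx : x ∈ segment 𝕜 a b)
    (hfx : f x = f b) : x = b := by
  rw [segment_eq_image_lineMap] at hx
  obtain ⟨t, -, rfl⟩ := hx
  rw [f.apply_lineMap, AffineMap.lineMap_eq_right_iff] at hfx
  rw [hfx.resolve_left hab, AffineMap.lineMap_apply_one]

theorem segment_inter_segment_eq_singleton (hab : f a < f b) (hbc : f b ≤ f c) :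
    segment 𝕜 a b ∩ segment 𝕜 b c = {b} := by
  refine Set.Subset.antisymm ?_ <| Set.singleton_subset_iff.2
    ⟨right_mem_segment 𝕜 a b, left_mem_segment 𝕜 b c⟩
  rintro x ⟨hx₁, hx₂⟩
  exact eq_right_of_mem_segment_of_apply_eq hab.ne hx₁ <| le_antisymm
    (apply_mem_Icc_of_mem_segment hab.le hx₁).2 (apply_mem_Icc_of_mem_segment hbc hx₂).1

theorem disjoint_segment_segment (hab : f a ≤ f b) (hbc : f b < f c) (hcd : f c ≤ f d) :
    Disjoint (segment 𝕜 a b) (segment 𝕜 c d) :=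
  Set.disjoint_left.2 fun _ hx₁ hx₂ =>
    ((apply_mem_Icc_of_mem_segment hab hx₁).2.trans_lt hbc).not_ge
      (apply_mem_Icc_of_mem_segment hcd hx₂).1

end Height

theorem IsSimpleOpenChain.of_strictMonoOn {n : ℕ} {w : ℕ → E3} (hn : 1 ≤ n) (f : E3 →ᵃ[ℝ] ℝ)
    (hf : StrictMonoOn (fun i => f (w i)) (Set.Iic n)) : IsSimpleOpenChain n w := by
  have hlt {i j : ℕ} (hij : i < j) (hj : j ≤ n) : f (w i) < f (w j) :=
    hf (hij.le.trans hj) hj hij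
  refine ⟨hn, fun i j hi hj hij hw => hij (hf.injOn hi hj (congrArg f hw)), fun i j hij hj => ?_⟩
  have hi_step := hlt i.lt_succ_self (hij.trans hj)
  have hj_step := hlt j.lt_succ_self hj
  split_ifs with h
  · subst h
    exact segment_inter_segment_eq_singleton hi_step hj_step.le
  · exact (disjoint_segment_segment hi_step.le (hlt (by omega) hj.le) hj_step.le).inter_eq

section Turn

variable {E : Type*} [NormedAddCommGroup E] [InnerProductSpace ℝ E] {u d : E} {t : ℝ}

/-- The vector of length `‖d‖` that has turned from `d` at time `0` towards the unit vector `u`,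
whose direction it attains at time `1`. Its direction is that of the linear interpolation, so when
`d` is a negative multiple of `u` the value is junk at the time the interpolation vanishes. -/
def turn (u d : E) (t : ℝ) : E :=
  ‖d‖ • NormedSpace.normalize (AffineMap.lineMap d (‖d‖ • u) t)

theorem turn_zero (u d : E) : turn u d 0 = d := by
  rw [turn, AffineMap.lineMap_apply_zero, NormedSpace.norm_smul_normalize]

theorem turn_one (hu : ‖u‖ = 1) (d : E) : turn u d 1 = ‖d‖ • u := by
  have hnorm : ‖‖d‖ • u‖ = ‖d‖ := by rw [norm_smul, norm_norm, hu, mul_one]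
  rw [turn, AffineMap.lineMap_apply_one]
  nth_rw 1 [← hnorm]
  exact NormedSpace.norm_smul_normalize _

theorem inner_lineMap_norm_smul_pos (hu : ‖u‖ = 1) (hd : d ≠ 0) (hud : 0 ≤ inner ℝ u d)
    (ht : t ∈ Set.Ioc 0 1) : 0 < inner ℝ u (AffineMap.lineMap d (‖d‖ • u) t) := by
  rw [AffineMap.lineMap_apply_module, inner_add_right, real_inner_smul_right,
    real_inner_smul_right, real_inner_smul_right, real_inner_self_eq_norm_sq, hu, one_pow, mul_one]
  exact add_pos_of_nonneg_of_pos (mul_nonneg (sub_nonneg.2 ht.2) hud)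
    (mul_pos ht.1 (norm_pos_iff.2 hd))

theorem lineMap_norm_smul_ne_zero (hu : ‖u‖ = 1) (hd : d ≠ 0) (hud : 0 ≤ inner ℝ u d)
    (ht : t ∈ Set.Icc 0 1) : AffineMap.lineMap d (‖d‖ • u) t ≠ 0 := by
  rcases ht.1.eq_or_lt with rfl | ht₀
  · rwa [AffineMap.lineMap_apply_zero]
  · intro h
    simpa [h] using inner_lineMap_norm_smul_pos hu hd hud ⟨ht₀, ht.2⟩

theorem norm_turn (hu : ‖u‖ = 1) (hd : d ≠ 0) (hud : 0 ≤ inner ℝ u d) (ht : t ∈ Set.Icc 0 1) :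
    ‖turn u d t‖ = ‖d‖ := by
  have hline := lineMap_norm_smul_ne_zero hu hd hud ht
  rw [turn, norm_smul, norm_norm, NormedSpace.norm_normalize hline, mul_one]

theorem continuousOn_turn (hu : ‖u‖ = 1) (hd : d ≠ 0) (hud : 0 ≤ inner ℝ u d) :
    ContinuousOn (turn u d) (Set.Icc 0 1) := by
  have hline : Continuous (AffineMap.lineMap d (‖d‖ • u) : ℝ → E) := AffineMap.lineMap_continuous
  have hinv : ContinuousOn (fun t : ℝ => ‖AffineMap.lineMap d (‖d‖ • u) t‖⁻¹) (Set.Icc 0 1) :=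
    hline.norm.continuousOn.inv₀ fun t ht =>
      norm_ne_zero_iff.2 (lineMap_norm_smul_ne_zero hu hd hud ht)
  exact (hinv.smul hline.continuousOn).const_smul ‖d‖

theorem inner_turn_pos (hu : ‖u‖ = 1) (hd : d ≠ 0) (hud : 0 ≤ inner ℝ u d)
    (ht : t ∈ Set.Ioc 0 1) : 0 < inner ℝ u (turn u d t) := by
  have hline := lineMap_norm_smul_ne_zero hu hd hud (Set.Ioc_subset_Icc_self ht)
  rw [turn, NormedSpace.normalize, real_inner_smul_right, real_inner_smul_right]
  exact mul_pos (norm_pos_iff.2 hd)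
    (mul_pos (inv_pos.2 (norm_pos_iff.2 hline)) (inner_lineMap_norm_smul_pos hu hd hud ht))

/-- The configuration at time `t` of the motion that fixes `v 0` and turns all edges of the chain
`v 0, v 1, …` towards `u` at once. -/
def turnChain (u : E) (v : ℕ → E) (t : ℝ) (i : ℕ) : E :=
  v 0 + ∑ j ∈ Finset.range i, turn u (v (j + 1) - v j) t

theorem turnChain_succ_sub (u : E) (v : ℕ → E) (t : ℝ) (i : ℕ) :
    turnChain u v t (i + 1) - turnChain u v t i = turn u (v (i + 1) - v i) t := by
  rw [turnChain, turnChain, Finset.sum_range_succ, add_sub_add_left_eq_sub, add_sub_cancel_left]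

theorem turnChain_zero (u : E) (v : ℕ → E) : turnChain u v 0 = v := by
  funext i
  simp only [turnChain, turn_zero, Finset.sum_range_sub, add_sub_cancel]

theorem turnChain_one (hu : ‖u‖ = 1) (v : ℕ → E) (i : ℕ) :
    turnChain u v 1 i = v 0 + (∑ j ∈ Finset.range i, ‖v (j + 1) - v j‖) • u := by
  simp only [turnChain, turn_one hu, Finset.sum_smul]

theorem strictMonoOn_inner_turnChain (hu : ‖u‖ = 1) {n : ℕ} {v : ℕ → E}
    (hv : ∀ i < n, v (i + 1) - v i ≠ 0) (hmono : ∀ i < n, 0 ≤ inner ℝ u (v (i + 1) - v i))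
    (ht : t ∈ Set.Ioc 0 1) :
    StrictMonoOn (fun i => inner ℝ u (turnChain u v t i)) (Set.Iic n) := by
  refine strictMonoOn_Iic_of_lt_succ fun i hi => ?_
  rw [← sub_pos, ← inner_sub_right, Nat.succ_eq_succ, turnChain_succ_sub]
  exact inner_turn_pos hu (hv i hi) (hmono i hi) ht

end Turn

theorem IsSimpleOpenChain.edge_ne_zero {n : ℕ} {v : ℕ → E3} (hv : IsSimpleOpenChain n v)
    {i : ℕ} (hi : i < n) : v (i + 1) - v i ≠ 0 :=
  sub_ne_zero.2 (hv.2.1 (i + 1) i hi hi.le i.succ_ne_self)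

theorem isSimpleOpenChain_turnChain {n : ℕ} {v : ℕ → E3} (hv : IsSimpleOpenChain n v) {u : E3}
    (hu : ‖u‖ = 1) (hmono : ∀ i < n, 0 ≤ inner ℝ u (v (i + 1) - v i)) {t : ℝ}
    (ht : t ∈ Set.Icc 0 1) : IsSimpleOpenChain n (turnChain u v t) := by
  rcases ht.1.eq_or_lt with rfl | ht₀
  · rwa [turnChain_zero]
  · exact .of_strictMonoOn hv.1 (innerₗ E3 u).toAffineMap <|
      strictMonoOn_inner_turnChain hu (fun _ => hv.edge_ne_zero) hmono ⟨ht₀, ht.2⟩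

theorem isChainMotion_turnChain {n : ℕ} {v : ℕ → E3} (hv : IsSimpleOpenChain n v) {u : E3}
    (hu : ‖u‖ = 1) (hmono : ∀ i < n, 0 ≤ inner ℝ u (v (i + 1) - v i)) :
    IsChainMotion n v (turnChain u v) := by
  refine ⟨fun i hi => ?_, fun i _ => congrFun (turnChain_zero u v) i,
    fun t ht => isSimpleOpenChain_turnChain hv hu hmono ht, fun t ht i hi => ?_⟩
  · refine continuousOn_const.add <| continuousOn_finsetSum _ fun j hj => ?_
    have hjn : j < n := (Finset.mem_range.1 hj).trans_le hi
    exact continuousOn_turn hu (hv.edge_ne_zero hjn) (hmono j hjn)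
  · rw [turnChain_succ_sub, norm_turn hu (hv.edge_ne_zero hi) (hmono i hi) ht]

theorem exists_unit_normal {E : Type*} [NormedAddCommGroup E] [InnerProductSpace ℝ E]
    {S : AffineSubspace ℝ E} [S.direction.HasOrthogonalProjection] (hS : S.direction ≠ ⊤) :
    ∃ u : E, ‖u‖ = 1 ∧ ∀ x ∈ S, ∀ y ∈ S, inner ℝ u (x - y) = 0 := by
  obtain ⟨z, hz, hz₀⟩ := Submodule.exists_mem_ne_zero_of_ne_bot
    (mt Submodule.orthogonal_eq_bot_iff.1 hS)
  refine ⟨NormedSpace.normalize z, NormedSpace.norm_normalize hz₀, fun x hx y hy => ?_⟩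
  exact Submodule.inner_left_of_mem_orthogonal (S.vsub_mem_direction hx hy)
    (S.directionᗮ.smul_mem _ hz)

theorem straightenable_of_planar_general {n : ℕ} {v : ℕ → E3} (hv : IsSimpleOpenChain n v)
    {u : E3} (hu : ‖u‖ = 1) (hmono : ∀ i < n, 0 ≤ inner ℝ u (v (i + 1) - v i)) :
    CanBeStraightened n v :=
  ⟨turnChain u v, isChainMotion_turnChain hv hu hmono, v 0, u, hu, fun i _ => turnChain_one hu v i⟩

/-- A simple open polygonal chain contained in a plane of ℝ³
(a 2-dimensional affine subspace containing all vertices) can be straightened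
by a motion in ℝ³. -/
theorem straightenable_of_planar (n : ℕ) (v : ℕ → E3)
    (hsimple : IsSimpleOpenChain n v)
    (S : AffineSubspace ℝ E3) (hS : Module.finrank ℝ S.direction = 2)
    (hplanar : ∀ i, i ≤ n → v i ∈ S) :
    CanBeStraightened n v := by
  have hS_ne_top : S.direction ≠ ⊤ := by
    intro h
    rw [h, finrank_top, finrank_euclideanSpace_fin] at hS
    omega
  obtain ⟨u, hu, hperp⟩ := exists_unit_normal hS_ne_top
  exact straightenable_of_planar_general hsimple hu fun i hi =>
    (hperp _ (hplanar (i + 1) hi) _ (hplanar i hi.le)).ge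
end
end

section
/- There exists a locked simple open polygonal chain in ℝ³ with 5 edges (6 vertices), i.e., a simple open polygonal chain that cannot be straightened by any motion. -/
/-!
Make each end edge (needle) of the chain longer than the three middle edges together, and let the
needles pierce the tetrahedron of the four middle vertices in a linked position. Being entangled in
this way says that `(1, 0, 0)` is a nonnegative combination of seven vectors of `ℝ × ℝ³ × ℝ³` which
move with the chain. In such a combination a vanishing coefficient would make two non-consecutive
edges meet, since the needles are too long to slip out of the tetrahedron. Hence during a motion all
coefficients stay positive; then the seven vectors form a basis, so the combination persists under
small changes of the chain, and by compactness also in limits. Entanglement is therefore preserved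
by motions, but a straight chain is not entangled.
-/

noncomputable section

open Topology

section PositiveCombinations

variable {ι : Type*} [Fintype ι]

theorem linearIndependent_of_forall_nonneg_combination_pos {𝕜 V : Type*} [Field 𝕜]
    [LinearOrder 𝕜] [IsStrictOrderedRing 𝕜] [AddCommGroup V] [Module 𝕜 V] {u : ι → V}
    {y : ι → 𝕜} (hy : ∀ i, 0 ≤ y i)
    (hpos : ∀ z : ι → 𝕜, (∀ i, 0 ≤ z i) → ∑ i, z i • u i = ∑ i, y i • u i → ∀ i, 0 < z i) :
    LinearIndependent 𝕜 u := by
  -- Along a relation with a negative coefficient, `y` moves until a first coordinate vanishes.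
  have relation_nonneg : ∀ g : ι → 𝕜, ∑ i, g i • u i = 0 → 0 ≤ g := by
    intro g hg
    by_contra hneg
    obtain ⟨j, hj⟩ : ∃ j, g j < 0 := by simpa [Pi.le_def] using hneg
    obtain ⟨k, hk, hmin⟩ := (Finset.univ.filter (g · < 0)).exists_min_image (fun i => y i / -g i)
      ⟨j, by simpa using hj⟩
    simp only [Finset.mem_filter_univ] at hk hmin
    have hr : 0 ≤ y k / -g k := div_nonneg (hy k) (neg_pos.2 hk).le
    have hz : 0 ≤ fun i => y i + y k / -g k * g i := fun i => by
      rcases lt_or_ge (g i) 0 with hi | hi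
      · have := (le_div_iff₀ (neg_pos.2 hi)).1 (hmin i hi)
        change 0 ≤ y i + y k / -g k * g i
        linarith
      · exact add_nonneg (hy i) (mul_nonneg hr hi)
    refine (hpos _ hz ?_ k).ne' ?_
    · simp only [add_smul, mul_smul, Finset.sum_add_distrib, ← Finset.smul_sum, hg, smul_zero,
        add_zero]
    · have := hk.ne
      field_simp
      ring
  refine Fintype.linearIndependent_iff.2 fun g hg i => le_antisymm ?_ (relation_nonneg g hg i)
  have := relation_nonneg (-g) (by simp [hg]) i
  simpa using this

variable {T F : Type*} [TopologicalSpace T] [NormedAddCommGroup F] [NormedSpace ℝ F]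

theorem eventually_exists_pos_combination_eq [FiniteDimensional ℝ F]
    (hcard : Fintype.card ι = Module.finrank ℝ F) {u : T → ι → F} {τ₀ : T}
    (hu : ∀ i, ContinuousAt (fun τ => u τ i) τ₀) (hli : LinearIndependent ℝ (u τ₀))
    {y : ι → ℝ} (hy : ∀ i, 0 < y i) :
    ∀ᶠ τ in 𝓝 τ₀, ∃ z : ι → ℝ, (∀ i, 0 < z i) ∧ ∑ i, z i • u τ i = ∑ i, y i • u τ₀ i := by
  let Φ : T → (ι → ℝ) →L[ℝ] F := fun τ => ∑ i, (ContinuousLinearMap.proj i).smulRight (u τ i)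
  have hΦ_apply : ∀ τ z, Φ τ z = ∑ i, z i • u τ i := fun τ z => by simp [Φ]
  have hΦ : ContinuousAt Φ τ₀ := tendsto_finsetSum _ fun i _ =>
    ((ContinuousLinearMap.smulRightL ℝ (ι → ℝ) F (.proj i)).continuous.tendsto _).comp (hu i)
  have hinj : Function.Injective (Φ τ₀ : (ι → ℝ) →ₗ[ℝ] F) := by
    rw [injective_iff_map_eq_zero]
    intro z hz
    exact funext (Fintype.linearIndependent_iff.1 hli z ((hΦ_apply τ₀ z).symm.trans hz))
  let e := (LinearMap.linearEquivOfInjective _ hinj (by simp [hcard])).toContinuousLinearEquiv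
  have he : (e : (ι → ℝ) →L[ℝ] F) = Φ τ₀ := by ext1; rfl
  let sol : T → ι → ℝ := fun τ => (Φ τ).inverse (Φ τ₀ y)
  have hsol : ContinuousAt sol τ₀ := by
    have hinverse : ContinuousAt ContinuousLinearMap.inverse (Φ τ₀) :=
      he ▸ (contDiffAt_map_inverse (n := 0) e).continuousAt
    exact (hinverse.comp hΦ).clm_apply continuousAt_const
  have hsol₀ : sol τ₀ = y := by
    simp only [sol, ← he, ContinuousLinearMap.inverse_equiv]
    exact e.symm_apply_apply y
  have hsol_pos : ∀ᶠ τ in 𝓝 τ₀, ∀ i, 0 < sol τ i := Filter.eventually_all.2 fun i =>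
    (continuousAt_pi.1 hsol i).eventually_const_lt (by simpa only [hsol₀] using hy i)
  filter_upwards [hsol_pos, hΦ.eventually (he ▸ e.nhds)] with τ hτ ⟨e', he'⟩
  refine ⟨sol τ, hτ, ?_⟩
  rw [← hΦ_apply, ← hΦ_apply]
  simp [sol, ← he']

theorem isClosed_setOf_exists_nonneg_combination_eq {u : T → ι → F}
    (hu : ∀ i, Continuous fun τ => u τ i) {b : F} {M : ι → ℝ}
    (hM : ∀ τ (y : ι → ℝ), (∀ i, 0 ≤ y i) → ∑ i, y i • u τ i = b → y ≤ M) :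
    IsClosed {τ | ∃ y : ι → ℝ, (∀ i, 0 ≤ y i) ∧ ∑ i, y i • u τ i = b} := by
  have hclosed : IsClosed {p : T × Set.Icc 0 M | ∑ i, p.2.1 i • u p.1 i = b} := by
    have hcombination : Continuous fun p : T × Set.Icc 0 M => ∑ i, p.2.1 i • u p.1 i :=
      continuous_finsetSum _ fun i _ =>
        ((continuous_apply i).comp (continuous_subtype_val.comp continuous_snd)).smul
          ((hu i).comp continuous_fst)
    exact isClosed_eq hcombination continuous_const
  convert isClosedMap_fst_of_compactSpace _ hclosed using 1
  ext τ
  constructor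
  · rintro ⟨y, hy, hb⟩
    exact ⟨(τ, ⟨y, hy, hM τ y hy hb⟩), hb, rfl⟩
  · rintro ⟨⟨τ, y, hy, _⟩, hb, rfl⟩
    exact ⟨y, hy, hb⟩

theorem exists_nonneg_combination_eq_of_preconnectedSpace [PreconnectedSpace T]
    [FiniteDimensional ℝ F] (hcard : Fintype.card ι = Module.finrank ℝ F) {u : T → ι → F}
    (hu : ∀ i, Continuous fun τ => u τ i) {b : F} {M : ι → ℝ}
    (hM : ∀ τ (y : ι → ℝ), (∀ i, 0 ≤ y i) → ∑ i, y i • u τ i = b → y ≤ M)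
    (hpos : ∀ τ (y : ι → ℝ), (∀ i, 0 ≤ y i) → ∑ i, y i • u τ i = b → ∀ i, 0 < y i)
    {τ₀ : T} (h₀ : ∃ y : ι → ℝ, (∀ i, 0 ≤ y i) ∧ ∑ i, y i • u τ₀ i = b) (τ : T) :
    ∃ y : ι → ℝ, (∀ i, 0 ≤ y i) ∧ ∑ i, y i • u τ i = b := by
  have hopen : IsOpen {τ | ∃ y : ι → ℝ, (∀ i, 0 ≤ y i) ∧ ∑ i, y i • u τ i = b} := by
    rw [isOpen_iff_mem_nhds]
    rintro σ ⟨y, hy, rfl⟩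
    have hli := linearIndependent_of_forall_nonneg_combination_pos hy (hpos σ)
    filter_upwards [eventually_exists_pos_combination_eq hcard (fun i => (hu i).continuousAt) hli
      (hpos σ y hy rfl)] with σ' ⟨z, hz, hsum⟩
    exact ⟨z, fun i => (hz i).le, hsum⟩
  have huniv := IsClopen.eq_univ
    ⟨isClosed_setOf_exists_nonneg_combination_eq hu hM, hopen⟩ ⟨τ₀, h₀⟩
  exact huniv.ge (Set.mem_univ τ)

end PositiveCombinations

section Segments

variable {𝕜 V : Type*} [Field 𝕜] [LinearOrder 𝕜] [IsStrictOrderedRing 𝕜] [AddCommGroup V]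
  [Module 𝕜 V]

theorem add_smul_sub_mem_segment {p q : V} {s : 𝕜} (hs₀ : 0 ≤ s) (hs₁ : s ≤ 1) :
    p + s • (q - p) ∈ segment 𝕜 p q :=
  segment_eq_image' 𝕜 p q ▸ ⟨s, ⟨hs₀, hs₁⟩, rfl⟩

theorem exists_ray_mem_segment_of_combination_eq {p q r z : V} {a b c s : 𝕜} (hb : 0 ≤ b)
    (hc : 0 ≤ c) (hbc : 0 < b + c) (hsum : a + b + c = 1) (hs : 0 ≤ s)
    (h : a • p + b • q + c • r = p + s • z) : ∃ k : 𝕜, 0 ≤ k ∧ p + k • z ∈ segment 𝕜 q r := by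
  refine ⟨s / (b + c), div_nonneg hs hbc.le, b / (b + c), c / (b + c), div_nonneg hb hbc.le,
    div_nonneg hc hbc.le, by rw [← add_div, div_self hbc.ne'], ?_⟩
  have hz : s • z = b • (q - p) + c • (r - p) := by
    obtain rfl : a = 1 - b - c := by linarith
    linear_combination (norm := module) -h
  have hone : b / (b + c) + c / (b + c) = 1 := by rw [← add_div, div_self hbc.ne']
  rw [div_eq_inv_mul s, mul_smul, hz]
  linear_combination (norm := module) hone • p

theorem disjoint_segment_iff {p q r z : V} :
    Disjoint (segment 𝕜 p q) (segment 𝕜 r z) ↔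
      ∀ s ∈ Set.Icc (0 : 𝕜) 1, ∀ t ∈ Set.Icc (0 : 𝕜) 1, p + s • (q - p) ≠ r + t • (z - r) := by
  simp only [segment_eq_image', Set.disjoint_iff_forall_ne, Set.forall_mem_image]

end Segments

section Tangles

variable {E : Type*} [AddCommGroup E]

/-- A pair of points `X` on the ray from `v 1` through `v 0` and `Y` on the ray from `v 4` through
`v 5`, both in the tetrahedron `v 1, v 2, v 3, v 4`, with `Y - X` a nonnegative multiple of
`v 2 - v 3`. The barycentric coordinates of `X` are `y 0, y 1, y 2 + y 3, y 4`, those of `Y` are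
`y 0, y 1 + y 2, y 3, y 4`, and `y 5`, `y 6` are the positions of `X`, `Y` on their rays. -/
structure IsTangle [Module ℝ E] (v : ℕ → E) (y : Fin 7 → ℝ) : Prop where
  nonneg : ∀ i, 0 ≤ y i
  sum_eq : y 0 + y 1 + y 2 + y 3 + y 4 = 1
  first_eq : y 0 • v 1 + y 1 • v 2 + (y 2 + y 3) • v 3 + y 4 • v 4 = v 1 + y 5 • (v 0 - v 1)
  last_eq : y 0 • v 1 + (y 1 + y 2) • v 2 + y 3 • v 3 + y 4 • v 4 = v 4 + y 6 • (v 5 - v 4)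

/-- The vectors whose nonnegative combinations equal to `(1, 0, 0)` are the tangles of `v`. The
first factor collects the sum of the barycentric coordinates, the others the equations for `X` and
`Y`, taken relative to `v 1` and `v 4`. -/
def tangleVector (v : ℕ → E) : Fin 7 → ℝ × E × E :=
  ![(1, 0, v 1 - v 4), (1, v 2 - v 1, v 2 - v 4), (1, v 3 - v 1, v 2 - v 4),
    (1, v 3 - v 1, v 3 - v 4), (1, v 4 - v 1, 0), (0, v 1 - v 0, 0), (0, 0, v 4 - v 5)]

theorem continuous_tangleVector [TopologicalSpace E] [IsTopologicalAddGroup E] {T : Type*}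
    [TopologicalSpace T] {γ : T → ℕ → E}
    (hγ : ∀ i ≤ 5, Continuous fun τ => γ τ i) (i : Fin 7) :
    Continuous fun τ => tangleVector (γ τ) i := by
  have h₀ := hγ 0 (by lia)
  have h₁ := hγ 1 (by lia)
  have h₂ := hγ 2 (by lia)
  have h₃ := hγ 3 (by lia)
  have h₄ := hγ 4 (by lia)
  have h₅ := hγ 5 (by lia)
  fin_cases i <;>
    simp only [tangleVector, Matrix.cons_val, Fin.reduceFinMk, Fin.zero_eta, Fin.mk_one] <;>
    fun_prop

variable [Module ℝ E] {v : ℕ → E} {y : Fin 7 → ℝ}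

theorem isTangle_iff :
    IsTangle v y ↔ (∀ i, 0 ≤ y i) ∧ ∑ i, y i • tangleVector v i = (1, 0, 0) := by
  simp only [tangleVector, Fin.sum_univ_seven, Matrix.cons_val, Prod.smul_mk, Prod.mk_add_mk,
    Prod.mk.injEq, smul_eq_mul, smul_zero, mul_one, mul_zero, add_zero, zero_add]
  constructor
  · rintro ⟨hnonneg, hsum, hfirst, hlast⟩
    refine ⟨hnonneg, hsum, ?_, ?_⟩
    · linear_combination (norm := module) hfirst - hsum • v 1
    · linear_combination (norm := module) hlast - hsum • v 4
  · rintro ⟨hnonneg, hsum, hfirst, hlast⟩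
    refine ⟨hnonneg, hsum, ?_, ?_⟩
    · linear_combination (norm := module) hfirst + hsum • v 1
    · linear_combination (norm := module) hlast + hsum • v 4

theorem IsTangle.reverse (h : IsTangle v y) :
    IsTangle (fun i => v (5 - i)) ![y 4, y 3, y 2, y 1, y 0, y 6, y 5] where
  nonneg i := by
    fin_cases i
    exacts [h.nonneg 4, h.nonneg 3, h.nonneg 2, h.nonneg 1, h.nonneg 0, h.nonneg 6, h.nonneg 5]
  sum_eq := by
    simp only [Matrix.cons_val]
    linarith only [h.sum_eq]
  first_eq := by
    simp only [Matrix.cons_val, Nat.reduceSub]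
    linear_combination (norm := module) h.last_eq
  last_eq := by
    simp only [Matrix.cons_val, Nat.reduceSub]
    linear_combination (norm := module) h.first_eq

/-- A chain of five edges whose end edges pierce the tetrahedron spanned by the middle edges in
the linked position described by `IsTangle`. -/
def IsEntangled (v : ℕ → E) : Prop := ∃ y, IsTangle v y

theorem IsEntangled.congr {w : ℕ → E} (h : IsEntangled v) (hw : ∀ i ≤ 5, w i = v i) :
    IsEntangled w := by
  obtain ⟨y, hnonneg, hsum, hfirst, hlast⟩ := h
  refine ⟨y, hnonneg, hsum, ?_, ?_⟩
  · rwa [hw 0 (by lia), hw 1 (by lia), hw 2 (by lia), hw 3 (by lia), hw 4 (by lia)]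
  · rwa [hw 1 (by lia), hw 2 (by lia), hw 3 (by lia), hw 4 (by lia), hw 5 (by lia)]

end Tangles

section Needles

variable {E : Type*} [NormedAddCommGroup E]

/-- The total length of the three middle edges of a chain of five edges. -/
def middleLength (v : ℕ → E) : ℝ := ‖v 2 - v 1‖ + ‖v 3 - v 2‖ + ‖v 4 - v 3‖

theorem middleLength_reverse (v : ℕ → E) : middleLength (fun i => v (5 - i)) = middleLength v := by
  simp only [middleLength, Nat.reduceSub]
  rw [norm_sub_rev (v 3), norm_sub_rev (v 2), norm_sub_rev (v 1)]
  ring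

variable [NormedSpace ℝ E] {v : ℕ → E} {y : Fin 7 → ℝ}

/-- A chain of five edges whose non-consecutive edges are disjoint and each of whose end edges
(the needles) is longer than the three middle edges together. -/
structure IsNeedleChain (v : ℕ → E) : Prop where
  disjoint_edges : ∀ i j, i + 1 < j → j < 5 →
    Disjoint (segment ℝ (v i) (v (i + 1))) (segment ℝ (v j) (v (j + 1)))
  middle_lt_first : middleLength v < ‖v 1 - v 0‖
  middle_lt_last : middleLength v < ‖v 5 - v 4‖

theorem IsNeedleChain.vertex_one_ne_zero (hv : IsNeedleChain v) : v 1 ≠ v 0 := by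
  have hmiddle : 0 ≤ middleLength v := by
    rw [middleLength]
    positivity
  exact sub_ne_zero.1 (norm_pos_iff.1 (hmiddle.trans_lt hv.middle_lt_first))

theorem IsNeedleChain.reverse (hv : IsNeedleChain v) : IsNeedleChain fun i => v (5 - i) where
  disjoint_edges i j hij hj := by
    have key := hv.disjoint_edges (5 - (j + 1)) (5 - (i + 1)) (by lia) (by lia)
    rw [show 5 - (j + 1) + 1 = 5 - j by lia, show 5 - (i + 1) + 1 = 5 - i by lia] at key
    rw [segment_symm ℝ (v (5 - i)), segment_symm ℝ (v (5 - j))]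
    exact key.symm
  middle_lt_first := by
    rw [middleLength_reverse, norm_sub_rev]
    exact hv.middle_lt_last
  middle_lt_last := by
    rw [middleLength_reverse, norm_sub_rev]
    exact hv.middle_lt_first

theorem convexHull_middle_subset_closedBall (v : ℕ → E) :
    convexHull ℝ (v '' Set.Icc 1 4) ⊆ Metric.closedBall (v 1) (middleLength v) := by
  refine convexHull_min ?_ (convex_closedBall _ _)
  rintro _ ⟨j, ⟨hj₁, hj₄⟩, rfl⟩
  rw [mem_closedBall_iff_norm, middleLength]
  have h₃ := norm_nonneg (v 3 - v 2)
  have h₄ := norm_nonneg (v 4 - v 3)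
  have h₃₁ := norm_sub_le_norm_sub_add_norm_sub (v 3) (v 2) (v 1)
  have h₄₁ := norm_sub_le_norm_sub_add_norm_sub (v 4) (v 3) (v 1)
  interval_cases j
  · rw [sub_self, norm_zero]
    positivity
  all_goals linarith

theorem IsNeedleChain.ray_param_lt_one (hv : IsNeedleChain v) {k : ℝ} (hk : 0 ≤ k)
    (hmem : v 1 + k • (v 0 - v 1) ∈ convexHull ℝ (v '' Set.Icc 1 4)) : k < 1 := by
  have hball := convexHull_middle_subset_closedBall v hmem
  rw [mem_closedBall_iff_norm, add_sub_cancel_left, norm_smul, Real.norm_of_nonneg hk,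
    norm_sub_rev] at hball
  by_contra! h
  exact (hball.trans_lt hv.middle_lt_first).not_ge (le_mul_of_one_le_left (norm_nonneg _) h)

theorem IsNeedleChain.ray_notMem_edge (hv : IsNeedleChain v) {k : ℝ} (hk : 0 ≤ k) {j : ℕ}
    (hj₂ : 2 ≤ j) (hj₃ : j ≤ 3) : v 1 + k • (v 0 - v 1) ∉ segment ℝ (v j) (v (j + 1)) := by
  intro hmem
  have hedge : segment ℝ (v j) (v (j + 1)) ⊆ convexHull ℝ (v '' Set.Icc 1 4) :=
    segment_subset_convexHull ⟨j, ⟨by lia, by lia⟩, rfl⟩ ⟨j + 1, ⟨by lia, by lia⟩, rfl⟩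
  refine Set.disjoint_left.1 (hv.disjoint_edges 0 j (by lia) (by lia)) ?_ hmem
  rw [segment_symm]
  exact add_smul_sub_mem_segment hk (hv.ray_param_lt_one hk (hedge hmem)).le

namespace IsTangle

theorem first_mem_convexHull (h : IsTangle v y) :
    v 1 + y 5 • (v 0 - v 1) ∈ convexHull ℝ (v '' Set.Icc 1 4) := by
  have hmem := (convex_convexHull ℝ (v '' Set.Icc 1 4)).sum_mem (t := Finset.univ)
    (w := ![y 0, y 1, y 2 + y 3, y 4]) (z := fun i => v (i + 1))
    (fun i _ => by
      fin_cases i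
      exacts [h.nonneg 0, h.nonneg 1, add_nonneg (h.nonneg 2) (h.nonneg 3), h.nonneg 4])
    (by
      simp only [Fin.sum_univ_four, Matrix.cons_val]
      linarith only [h.sum_eq])
    (fun i _ => subset_convexHull ℝ _ ⟨i + 1, ⟨by lia, by lia⟩, rfl⟩)
  simp only [Fin.sum_univ_four, Matrix.cons_val] at hmem
  exact h.first_eq ▸ hmem

theorem five_lt_one (h : IsTangle v y) (hv : IsNeedleChain v) : y 5 < 1 :=
  hv.ray_param_lt_one (h.nonneg 5) h.first_mem_convexHull

theorem six_lt_one (h : IsTangle v y) (hv : IsNeedleChain v) : y 6 < 1 :=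
  h.reverse.five_lt_one hv.reverse

theorem le_one (h : IsTangle v y) (hv : IsNeedleChain v) : y ≤ 1 := by
  have h₀ := h.nonneg 0
  have h₁ := h.nonneg 1
  have h₂ := h.nonneg 2
  have h₃ := h.nonneg 3
  have h₄ := h.nonneg 4
  have h₅ := h.five_lt_one hv
  have h₆ := h.six_lt_one hv
  have hsum := h.sum_eq
  intro i
  fin_cases i <;> simp only [Fin.reduceFinMk, Fin.zero_eta, Fin.mk_one, Pi.one_apply] <;> linarith

theorem pos_two (h : IsTangle v y) (hv : IsNeedleChain v) : 0 < y 2 := by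
  refine (h.nonneg 2).lt_of_ne fun h₂ => ?_
  have hmeet : v 1 + y 5 • (v 0 - v 1) = v 4 + y 6 • (v 5 - v 4) := by
    rw [← h.first_eq, ← h.last_eq, ← h₂, add_zero, zero_add]
  refine Set.disjoint_left.1 (hv.disjoint_edges 0 4 (by lia) (by lia)) ?_
    (hmeet ▸ add_smul_sub_mem_segment (h.nonneg 6) (h.six_lt_one hv).le)
  rw [segment_symm]
  exact add_smul_sub_mem_segment (h.nonneg 5) (h.five_lt_one hv).le

theorem pos_four (h : IsTangle v y) (hv : IsNeedleChain v) : 0 < y 4 := by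
  refine (h.nonneg 4).lt_of_ne fun h₄ => ?_
  obtain ⟨k, hk, hmem⟩ := exists_ray_mem_segment_of_combination_eq (a := y 0) (h.nonneg 1)
    (add_nonneg (h.nonneg 2) (h.nonneg 3))
    (add_pos_of_nonneg_of_pos (h.nonneg 1) (add_pos_of_pos_of_nonneg (h.pos_two hv) (h.nonneg 3)))
    (by linarith [h.sum_eq]) (h.nonneg 5)
    (by simpa only [← h₄, zero_smul, add_zero] using h.first_eq)
  exact hv.ray_notMem_edge (j := 2) hk (by lia) (by lia) hmem

theorem pos_one (h : IsTangle v y) (hv : IsNeedleChain v) : 0 < y 1 := by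
  refine (h.nonneg 1).lt_of_ne fun h₁ => ?_
  obtain ⟨k, hk, hmem⟩ := exists_ray_mem_segment_of_combination_eq (a := y 0)
    (add_nonneg (h.nonneg 2) (h.nonneg 3)) (h.nonneg 4)
    (add_pos_of_nonneg_of_pos (add_nonneg (h.nonneg 2) (h.nonneg 3)) (h.pos_four hv))
    (by linarith [h.sum_eq]) (h.nonneg 5)
    (by simpa only [← h₁, zero_smul, add_zero] using h.first_eq)
  exact hv.ray_notMem_edge (j := 3) hk (by lia) (by lia) hmem

theorem pos_zero (h : IsTangle v y) (hv : IsNeedleChain v) : 0 < y 0 :=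
  h.reverse.pos_four hv.reverse

theorem pos_three (h : IsTangle v y) (hv : IsNeedleChain v) : 0 < y 3 :=
  h.reverse.pos_one hv.reverse

-- If `X = v 1`, then `v 1` is a convex combination of `v 2, v 3, v 4`, and its weight can be
-- redistributed over them.
theorem pos_five (h : IsTangle v y) (hv : IsNeedleChain v) : 0 < y 5 := by
  refine (h.nonneg 5).lt_of_ne fun h₅ => ?_
  have h₀ : 0 < 1 - y 0 := by
    linarith [h.sum_eq, h.pos_one hv, h.pos_two hv, h.pos_three hv, h.pos_four hv]
  set r := y 0 / (1 - y 0) with hr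
  have hr₀ : 0 ≤ r := div_nonneg (h.nonneg 0) h₀.le
  have hweight : y 0 + r * (y 0 - 1) = 0 := by
    rw [hr]
    field_simp
    ring
  have hdependency : (y 0 - 1) • v 1 + y 1 • v 2 + (y 2 + y 3) • v 3 + y 4 • v 4 = 0 := by
    have := h.first_eq
    rw [← h₅] at this
    linear_combination (norm := module) this
  have hredistributed : IsTangle v
      ![0, y 1 + r * y 1, y 2, y 3 + r * (y 2 + y 3), y 4 + r * y 4, 0, y 6] :=
    { nonneg := by
        have h₁ := mul_nonneg hr₀ (h.nonneg 1)
        have h₂₃ := mul_nonneg hr₀ (add_nonneg (h.nonneg 2) (h.nonneg 3))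
        have h₄ := mul_nonneg hr₀ (h.nonneg 4)
        intro i
        fin_cases i
        exacts [le_rfl, add_nonneg (h.nonneg 1) h₁, h.nonneg 2, add_nonneg (h.nonneg 3) h₂₃,
          add_nonneg (h.nonneg 4) h₄, le_rfl, h.nonneg 6]
      sum_eq := by
        simp only [Matrix.cons_val]
        linear_combination (1 + r) * h.sum_eq - hweight
      first_eq := by
        simp only [Matrix.cons_val]
        linear_combination (norm := module) hdependency + r • hdependency - hweight • v 1
      last_eq := by
        simp only [Matrix.cons_val]
        linear_combination (norm := module) h.last_eq + r • hdependency - hweight • v 1 }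
  exact (hredistributed.pos_zero hv).ne' rfl

theorem pos_six (h : IsTangle v y) (hv : IsNeedleChain v) : 0 < y 6 :=
  h.reverse.pos_five hv.reverse

theorem pos (h : IsTangle v y) (hv : IsNeedleChain v) (i : Fin 7) : 0 < y i := by
  fin_cases i
  exacts [h.pos_zero hv, h.pos_one hv, h.pos_two hv, h.pos_three hv, h.pos_four hv,
    h.pos_five hv, h.pos_six hv]

end IsTangle

theorem IsEntangled.of_continuous {T : Type*} [TopologicalSpace T] [PreconnectedSpace T]
    (hE : Module.finrank ℝ E = 3) {γ : T → ℕ → E} (hγ : ∀ i ≤ 5, Continuous fun τ => γ τ i)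
    (hneedle : ∀ τ, IsNeedleChain (γ τ)) {τ₀ : T} (h₀ : IsEntangled (γ τ₀)) (τ : T) :
    IsEntangled (γ τ) := by
  have : FiniteDimensional ℝ E := Module.finite_of_finrank_pos (by lia)
  simp only [IsEntangled, isTangle_iff] at h₀ ⊢
  refine exists_nonneg_combination_eq_of_preconnectedSpace (by simp [hE])
    (continuous_tangleVector hγ) (M := 1) (fun σ y hy hsum => ?_) (fun σ y hy hsum => ?_) h₀ τ
  · exact (isTangle_iff.2 ⟨hy, hsum⟩).le_one (hneedle σ)
  · exact (isTangle_iff.2 ⟨hy, hsum⟩).pos (hneedle σ)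

end Needles

section LockedChains

theorem isSimpleOpenChain_of_linearIndependent {n : ℕ} {v : ℕ → E3} (hn : 2 ≤ n)
    (hcorner : ∀ i, i + 2 ≤ n → LinearIndependent ℝ ![v i - v (i + 1), v (i + 2) - v (i + 1)])
    (hdisjoint : ∀ i j, i + 1 < j → j < n →
      Disjoint (segment ℝ (v i) (v (i + 1))) (segment ℝ (v j) (v (j + 1)))) :
    IsSimpleOpenChain n v := by
  have hne : ∀ i j, i < j → j ≤ n → v i ≠ v j := by
    intro i j hij hj
    obtain rfl | rfl | h : j = i + 1 ∨ j = i + 2 ∨ i + 2 < j := by lia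
    · rcases Nat.lt_or_ge (i + 1) n with hi | hi
      · exact sub_ne_zero.1 ((hcorner i hi).ne_zero 0)
      · obtain ⟨k, rfl⟩ : ∃ k, i = k + 1 := ⟨i - 1, by lia⟩
        exact (sub_ne_zero.1 ((hcorner k hj).ne_zero 1)).symm
    · exact sub_left_injective.ne_iff.1 ((hcorner i hj).injective.ne Fin.zero_ne_one)
    · obtain ⟨k, rfl⟩ : ∃ k, j = k + 1 := ⟨j - 1, by lia⟩
      exact (hdisjoint i k (by lia) hj).ne_of_mem (left_mem_segment ..) (right_mem_segment ..)
  refine ⟨by lia, fun i j hi hj hij => ?_, fun i j hij hj => ?_⟩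
  · exact hij.lt_or_gt.elim (fun h => hne i j h hj) fun h => (hne j i h hi).symm
  · split_ifs with h
    · subst h
      rw [segment_symm]
      exact segment_inter_eq_endpoint_of_linearIndependent_sub ℝ (hcorner i hj)
    · exact (hdisjoint i j (by lia) hj).inter_eq

theorem IsSimpleOpenChain.isNeedleChain {v : ℕ → E3} (h : IsSimpleOpenChain 5 v)
    (hfirst : middleLength v < ‖v 1 - v 0‖) (hlast : middleLength v < ‖v 5 - v 4‖) :
    IsNeedleChain v where
  disjoint_edges i j hij hj := by
    rw [Set.disjoint_iff_inter_eq_empty, h.2.2 i j (by lia) hj, if_neg (by lia)]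
  middle_lt_first := hfirst
  middle_lt_last := hlast

theorem IsChainMotion.isNeedleChain {v : ℕ → E3} {γ : ℝ → ℕ → E3} (hγ : IsChainMotion 5 v γ)
    (hfirst : middleLength v < ‖v 1 - v 0‖) (hlast : middleLength v < ‖v 5 - v 4‖) {t : ℝ}
    (ht : t ∈ Set.Icc (0 : ℝ) 1) : IsNeedleChain (γ t) := by
  obtain ⟨-, -, hsimple, hlength⟩ := hγ
  have hmiddle : middleLength (γ t) = middleLength v := by
    simp only [middleLength, hlength t ht 1 (by lia), hlength t ht 2 (by lia),
      hlength t ht 3 (by lia)]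
  refine (hsimple t ht).isNeedleChain ?_ ?_
  · rwa [hmiddle, hlength t ht 0 (by lia)]
  · rwa [hmiddle, hlength t ht 4 (by lia)]

-- On a straight chain the ray from `v 1` through `v 0` points away from the tetrahedron.
theorem IsStraightening.not_isEntangled {v w : ℕ → E3} (h : IsStraightening 5 v w)
    (hneedle : IsNeedleChain w) : ¬ IsEntangled w := by
  rintro ⟨y, hy⟩
  obtain ⟨p, u, hu, hw⟩ := h
  have hw₀ := hw 0 (by lia)
  have hw₁ := hw 1 (by lia)
  have hw₂ := hw 2 (by lia)
  have hw₃ := hw 3 (by lia)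
  have hw₄ := hw 4 (by lia)
  set ℓ : ℕ → ℝ := fun j => ‖v (j + 1) - v j‖
  have hℓ : ∀ j, 0 ≤ ℓ j := fun j => norm_nonneg _
  simp only [Finset.sum_range_succ, Finset.sum_range_zero, zero_add] at hw₀ hw₁ hw₂ hw₃ hw₄
  have hsum : (y 1 * ℓ 1 + (y 2 + y 3) * (ℓ 1 + ℓ 2) + y 4 * (ℓ 1 + ℓ 2 + ℓ 3) + y 5 * ℓ 0) • u
      = 0 := by
    have := hy.first_eq
    rw [hw₀, hw₁, hw₂, hw₃, hw₄] at this
    linear_combination (norm := module) this - hy.sum_eq • (p + ℓ 0 • u)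
  have hcoeff := (smul_eq_zero.1 hsum).resolve_right (norm_ne_zero_iff.1 (hu ▸ one_ne_zero))
  have hℓ₀ : 0 < ℓ 0 := (hℓ 0).lt_of_ne fun h => hneedle.vertex_one_ne_zero (by rw [hw₀, hw₁, ← h])
  refine hcoeff.not_gt ?_
  have := hy.pos_five hneedle
  have := hy.nonneg 1
  have := hy.nonneg 2
  have := hy.nonneg 3
  have := hy.nonneg 4
  have := hℓ 1
  have := hℓ 2
  have := hℓ 3
  positivity

theorem IsEntangled.not_canBeStraightened {v : ℕ → E3} (h : IsEntangled v)
    (hfirst : middleLength v < ‖v 1 - v 0‖) (hlast : middleLength v < ‖v 5 - v 4‖) :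
    ¬ CanBeStraightened 5 v := by
  rintro ⟨γ, hγ, hstraight⟩
  have hneedle : ∀ t : unitInterval, IsNeedleChain (γ t) :=
    fun t => hγ.isNeedleChain hfirst hlast t.2
  have hcont : ∀ i ≤ 5, Continuous fun t : unitInterval => γ t i :=
    fun i hi => continuousOn_iff_continuous_domRestrict.1 (hγ.1 i hi)
  have hstart : IsEntangled (γ (0 : unitInterval)) := h.congr hγ.2.1
  exact hstraight.not_isEntangled (hneedle 1)
    (IsEntangled.of_continuous (by simp) hcont hneedle hstart 1)

/-- A chain of five edges whose vertices `1, …, 4` span the standard corner tetrahedron and whose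
end edges are entangled with it. -/
def lockedChain : ℕ → E3
  | 0 => !₂[-5, 2, 1]
  | 1 => !₂[1, 0, 0]
  | 2 => !₂[0, 0, 1]
  | 3 => 0
  | 4 => !₂[0, 1, 0]
  | _ => !₂[2, -5, 3]

theorem isSimpleOpenChain_lockedChain : IsSimpleOpenChain 5 lockedChain := by
  refine isSimpleOpenChain_of_linearIndependent (by lia) (fun i hi => ?_) fun i j hij hj => ?_
  · rw [LinearIndependent.pair_iff]
    intro s t h
    have hi₃ : i ≤ 3 := by lia
    interval_cases i
    all_goals
      simp only [lockedChain, PiLp.ext_iff, Fin.forall_fin_succ, PiLp.add_apply, PiLp.sub_apply,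
        PiLp.smul_apply, PiLp.zero_apply, smul_eq_mul, Matrix.cons_val_zero,
        Matrix.cons_val_succ, IsEmpty.forall_iff, and_true, zero_add, Nat.reduceAdd] at h
      constructor <;> linarith
  · rw [disjoint_segment_iff]
    rintro s ⟨_, _⟩ t ⟨_, _⟩ h
    obtain ⟨rfl, rfl⟩ | ⟨rfl, rfl⟩ | ⟨rfl, rfl⟩ | ⟨rfl, rfl⟩ | ⟨rfl, rfl⟩ | ⟨rfl, rfl⟩ :
        i = 0 ∧ j = 2 ∨ i = 0 ∧ j = 3 ∨ i = 0 ∧ j = 4 ∨ i = 1 ∧ j = 3 ∨ i = 1 ∧ j = 4 ∨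
          i = 2 ∧ j = 4 := by lia
    all_goals
      simp only [lockedChain, PiLp.ext_iff, Fin.forall_fin_succ, PiLp.add_apply, PiLp.sub_apply,
        PiLp.smul_apply, PiLp.zero_apply, smul_eq_mul, Matrix.cons_val_zero,
        Matrix.cons_val_succ, IsEmpty.forall_iff, and_true, zero_add, Nat.reduceAdd] at h
      linarith

theorem isEntangled_lockedChain : IsEntangled lockedChain := by
  refine ⟨![1 / 4, 1 / 8, 1 / 4, 1 / 8, 1 / 4, 1 / 8, 1 / 8], fun i => ?_, ?_, ?_, ?_⟩
  · fin_cases i <;> norm_num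
  · simp only [Matrix.cons_val]
    norm_num
  · simp only [Matrix.cons_val]
    ext i
    fin_cases i <;> norm_num [lockedChain]
  · simp only [Matrix.cons_val]
    ext i
    fin_cases i <;> norm_num [lockedChain]

theorem middleLength_lockedChain_lt : middleLength lockedChain < 5 := by
  have h₁ : ‖lockedChain 1‖ = 1 := by
    simp [lockedChain, EuclideanSpace.norm_eq, Fin.sum_univ_three]
  have h₂ : ‖lockedChain 2‖ = 1 := by
    simp [lockedChain, EuclideanSpace.norm_eq, Fin.sum_univ_three]
  have h₃ : lockedChain 3 = 0 := rfl
  have h₄ : ‖lockedChain 4‖ = 1 := by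
    simp [lockedChain, EuclideanSpace.norm_eq, Fin.sum_univ_three]
  have := norm_sub_le (lockedChain 2) (lockedChain 1)
  rw [middleLength, h₃, zero_sub, norm_neg, sub_zero]
  linarith

theorem le_norm_first_edge_lockedChain : 5 ≤ ‖lockedChain 1 - lockedChain 0‖ := by
  refine le_trans ?_ (PiLp.norm_apply_le (lockedChain 1 - lockedChain 0) 0)
  norm_num [lockedChain]

theorem le_norm_last_edge_lockedChain : 5 ≤ ‖lockedChain 5 - lockedChain 4‖ := by
  refine le_trans ?_ (PiLp.norm_apply_le (lockedChain 5 - lockedChain 4) 1)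
  norm_num [lockedChain]

end LockedChains

/-- There exists a locked simple open polygonal chain in ℝ³ with
5 edges (6 vertices): a simple open chain that cannot be straightened by any motion. -/
theorem exists_locked_open_chain :
    ∃ v : ℕ → E3, IsSimpleOpenChain 5 v ∧ ¬ CanBeStraightened 5 v :=
  ⟨lockedChain, isSimpleOpenChain_lockedChain, isEntangled_lockedChain.not_canBeStraightened
    (middleLength_lockedChain_lt.trans_le le_norm_first_edge_lockedChain)
    (middleLength_lockedChain_lt.trans_le le_norm_last_edge_lockedChain)⟩
end
end
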